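/- arXiv:math/0502056 — 7 statements merged into one kernel-verified Lean document; each statement's English description precedes it below -/
import Mathlib

section
/- Let m ≥ 1, let k be an even integer with k ≥ 2m+2, and let n ≥ 2m+2. Let B ∈ O(n) be the block-diagonal matrix diag(1, ε₁, …, ε_m, −1, …, −1), where ε_t is the 2×2 rotation matrix [[cos(2πt/k), sin(2πt/k)], [−sin(2πt/k), cos(2πt/k)]] occupying rows and columns 2t, 2t+1, and the last n−2m−1 diagonal entries equal −1. Then B^k = I, and the fixed-point group of the automorphism Φ : A ↦ B A B⁻¹ of SO(n) is {A ∈ SO(n) : AB = BA} = { diag(a, A₁, …, A_m, A′) : a ∈ {1, −1}, each A_t ∈ SO(2), A′ ∈ O(n−2m−1), a · det A′ = 1 }. In particular this fixed-point group contains the block-diagonal subgroup H = SO(2)^m × SO(n−2m−1) (taking a = 1), so SO(n)/SO(2)^m × SO(n−2m−1) is a homogeneous Φ-space generated by an inner automorphism of order k. -/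
open Matrix

/-- 0-based block index for the block-diagonal pattern
`diag(a, A₁, …, A_m, A')` with `A_t` of size 2 (rows `2t, 2t+1`, 1-based) and `A'` of size
`n - 2m - 1`. -/
def blkIdx (m i : ℕ) : ℕ := if i = 0 then 0 else if i ≤ 2 * m then (i + 1) / 2 else m + 1

/-- The square diagonal sub-block of size `b` of `A` starting at (0-based) position `a`. -/
def subBlock {n : ℕ} (A : Matrix (Fin n) (Fin n) ℝ) (a b : ℕ) (h : a + b ≤ n) :
    Matrix (Fin b) (Fin b) ℝ :=
  A.submatrix (fun k => ⟨a + k.val, by have := k.isLt; omega⟩)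
    (fun k => ⟨a + k.val, by have := k.isLt; omega⟩)

/-- The matrix `B = diag(1, ε₁, …, ε_m, -1, …, -1)`, where
`ε_t = [[cos(2πt/k), sin(2πt/k)], [-sin(2πt/k), cos(2πt/k)]]` occupies rows and columns
`2t, 2t+1` (1-based; 0-based `2t-1, 2t`, and for such a row `i` one has `t = (i+1)/2`). -/
noncomputable def Bflag (n m k : ℕ) : Matrix (Fin n) (Fin n) ℝ :=
  Matrix.of fun i j =>
    if i.val = 0 ∧ j.val = 0 then 1
    else if 1 ≤ i.val ∧ i.val ≤ 2 * m ∧ i = j then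
      Real.cos (2 * Real.pi * (((i.val + 1) / 2 : ℕ) : ℝ) / (k : ℝ))
    else if i.val % 2 = 1 ∧ i.val ≤ 2 * m ∧ j.val = i.val + 1 then
      Real.sin (2 * Real.pi * (((i.val + 1) / 2 : ℕ) : ℝ) / (k : ℝ))
    else if i.val % 2 = 0 ∧ 1 ≤ i.val ∧ i.val ≤ 2 * m ∧ j.val + 1 = i.val then
      -Real.sin (2 * Real.pi * (((i.val + 1) / 2 : ℕ) : ℝ) / (k : ℝ))
    else if 2 * m + 1 ≤ i.val ∧ i = j then -1
    else 0

def BD {n : ℕ} (m : ℕ) (X : Matrix (Fin n) (Fin n) ℝ) : Prop :=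
  ∀ i j : Fin n, blkIdx m i.val ≠ blkIdx m j.val → X i j = 0

def IsBlk (n m v a b : ℕ) : Prop :=
  ∀ i, i < n → (blkIdx m i = v ↔ a ≤ i ∧ i < a + b)

lemma blkIdx_spec (m i : ℕ) : (i = 0 ∧ blkIdx m i = 0) ∨
    (1 ≤ i ∧ i ≤ 2 * m ∧ blkIdx m i = (i + 1) / 2) ∨ (2 * m < i ∧ blkIdx m i = m + 1) := by
  by_cases h : i = 0
  · simp [blkIdx, h]
  · by_cases h2 : i ≤ 2 * m
    · simp [blkIdx, h, h2]; omega
    · simp [blkIdx, h, h2]; omega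

lemma isBlk_zero (n m : ℕ) : IsBlk n m 0 0 1 := by
  intro i hi
  have := blkIdx_spec m i
  omega

lemma isBlk_mid (n m t : ℕ) (h1 : 1 ≤ t) (h2 : t ≤ m) : IsBlk n m t (2 * t - 1) 2 := by
  intro i hi
  have := blkIdx_spec m i
  omega

lemma isBlk_last (n m : ℕ) (hn : 2 * m + 2 ≤ n) :
    IsBlk n m (m + 1) (2 * m + 1) (n - (2 * m + 1)) := by
  intro i hi
  have := blkIdx_spec m i
  omega

def blkEquiv {n m v a b : ℕ} (hb : IsBlk n m v a b) (h : a + b ≤ n) :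
    Fin b ≃ {i : Fin n // blkIdx m i.val = v} where
  toFun k := ⟨⟨a + k.val, by have := k.isLt; omega⟩,
    (hb _ (by have := k.isLt; omega)).2 ⟨by simp, by simp⟩⟩
  invFun i := ⟨i.1.val - a, by have := (hb _ i.1.isLt).1 i.2; omega⟩
  left_inv k := by ext; simp
  right_inv i := by
    have := (hb _ i.1.isLt).1 i.2
    ext; simp; omega

lemma sum_blk {n m v a b : ℕ} (hb : IsBlk n m v a b) (h : a + b ≤ n) (f : Fin n → ℝ)
    (hf : ∀ i : Fin n, blkIdx m i.val ≠ v → f i = 0) :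
    ∑ i, f i = ∑ k : Fin b, f ⟨a + k.val, by have := k.isLt; omega⟩ := by
  classical
  rw [← Finset.sum_subset (Finset.subset_univ (Finset.univ.filter fun i : Fin n => blkIdx m i.val = v))
    (by intro x _ hx; exact hf x (by simpa using hx))]
  rw [← Finset.sum_subtype_eq_sum_filter, Finset.subtype_univ]
  exact (Equiv.sum_comp (blkEquiv hb h) (fun i => f i.1)).symm

lemma sb_mul {n m v a b : ℕ} (hb : IsBlk n m v a b) (h : a + b ≤ n)
    (X Y : Matrix (Fin n) (Fin n) ℝ) (hX : BD m X) :
    subBlock (X * Y) a b h = subBlock X a b h * subBlock Y a b h := by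
  ext i j
  simp only [subBlock, submatrix_apply, Matrix.mul_apply]
  apply sum_blk hb h (fun l => X _ l * Y l _)
  intro l hl
  rw [hX _ _ _, zero_mul]
  rw [(hb _ _).2 ⟨by simp, by simp⟩]
  · exact fun e => hl e.symm
  · have := i.isLt; omega

lemma BD.mul {n m : ℕ} {X Y : Matrix (Fin n) (Fin n) ℝ} (hX : BD m X) (hY : BD m Y) :
    BD m (X * Y) := by
  intro i j hij
  rw [Matrix.mul_apply]
  apply Finset.sum_eq_zero
  intro l _
  by_cases h : blkIdx m i.val = blkIdx m l.val
  · rw [hY l j (by rwa [← h]), mul_zero]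
  · rw [hX i l h, zero_mul]

lemma BD.transpose {n m : ℕ} {X : Matrix (Fin n) (Fin n) ℝ} (hX : BD m X) : BD m Xᵀ :=
  fun i j hij => hX j i (Ne.symm hij)

lemma BD.add {n m : ℕ} {X Y : Matrix (Fin n) (Fin n) ℝ} (hX : BD m X) (hY : BD m Y) :
    BD m (X + Y) := by
  intro i j hij
  rw [Matrix.add_apply, hX i j hij, hY i j hij, add_zero]

lemma BD.diag {n m : ℕ} (d : Fin n → ℝ) : BD m (diagonal d) := by
  intro i j hij
  exact diagonal_apply_ne _ (fun e => hij (by rw [e]))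

lemma BD.one {n m : ℕ} : BD m (1 : Matrix (Fin n) (Fin n) ℝ) := by
  rw [← diagonal_one]; exact BD.diag _

lemma BD.pow {n m : ℕ} {X : Matrix (Fin n) (Fin n) ℝ} (hX : BD m X) (k : ℕ) : BD m (X ^ k) := by
  induction k with
  | zero => rw [pow_zero]; exact BD.one
  | succ k ih => rw [pow_succ]; exact ih.mul hX

lemma sub_one {n a b : ℕ} (h : a + b ≤ n) :
    subBlock (1 : Matrix (Fin n) (Fin n) ℝ) a b h = 1 := by
  ext i j
  simp [subBlock, Matrix.one_apply, Fin.ext_iff]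

lemma sub_transpose {n a b : ℕ} (h : a + b ≤ n) (X : Matrix (Fin n) (Fin n) ℝ) :
    subBlock Xᵀ a b h = (subBlock X a b h)ᵀ := rfl

lemma sb_pow {n m v a b : ℕ} (hb : IsBlk n m v a b) (h : a + b ≤ n)
    (X : Matrix (Fin n) (Fin n) ℝ) (hX : BD m X) (k : ℕ) :
    subBlock (X ^ k) a b h = (subBlock X a b h) ^ k := by
  induction k with
  | zero => rw [pow_zero, pow_zero, sub_one]
  | succ k ih => rw [pow_succ, pow_succ, sb_mul hb h _ _ (hX.pow k), ih]

lemma ext_one {n m v a b : ℕ} (hb : IsBlk n m v a b) (h : a + b ≤ n)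
    {X Y : Matrix (Fin n) (Fin n) ℝ} (he : subBlock X a b h = subBlock Y a b h)
    (i j : Fin n) (hi : blkIdx m i.val = v) (hj : blkIdx m j.val = v) : X i j = Y i j := by
  have h1 := (hb _ i.isLt).1 hi
  have h2 := (hb _ j.isLt).1 hj
  have := congrFun (congrFun he ⟨i.val - a, by omega⟩) ⟨j.val - a, by omega⟩
  simp only [subBlock, submatrix_apply] at this
  convert this using 2 <;> ext <;> simp <;> omega

lemma BD.ext {n m : ℕ} (hn : 2 * m + 2 ≤ n) {X Y : Matrix (Fin n) (Fin n) ℝ}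
    (hX : BD m X) (hY : BD m Y)
    (h0 : subBlock X 0 1 (by omega) = subBlock Y 0 1 (by omega))
    (h1 : ∀ t : ℕ, ∀ _h1 : 1 ≤ t, ∀ _h : t ≤ m,
      subBlock X (2 * t - 1) 2 (by omega) = subBlock Y (2 * t - 1) 2 (by omega))
    (h2 : subBlock X (2 * m + 1) (n - (2 * m + 1)) (by omega)
      = subBlock Y (2 * m + 1) (n - (2 * m + 1)) (by omega)) : X = Y := by
  ext i j
  by_cases hij : blkIdx m i.val = blkIdx m j.val
  · by_cases c0 : blkIdx m i.val = 0
    · exact ext_one (isBlk_zero n m) _ h0 i j c0 (hij ▸ c0)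
    · by_cases c1 : blkIdx m i.val ≤ m
      · exact ext_one (isBlk_mid n m _ (by omega) c1) _ (h1 _ (by omega) c1) i j rfl hij.symm
      · have c2 : blkIdx m i.val = m + 1 := by
          unfold blkIdx at *
          split_ifs at * <;> omega
        exact ext_one (isBlk_last n m hn) _ h2 i j c2 (hij ▸ c2)
  · rw [hX i j hij, hY i j hij]

lemma det_sub {n m v a b : ℕ} (hb : IsBlk n m v a b) (h : a + b ≤ n)
    (X : Matrix (Fin n) (Fin n) ℝ) :
    (X.toSquareBlock (fun i : Fin n => blkIdx m i.val) v).det = (subBlock X a b h).det := by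
  rw [← Matrix.det_submatrix_equiv_self (blkEquiv hb h)]
  rfl

lemma BD.det_eq {n m : ℕ} (hn : 2 * m + 2 ≤ n) {X : Matrix (Fin n) (Fin n) ℝ} (hX : BD m X)
    (hmid : ∀ t : ℕ, ∀ _h1 : 1 ≤ t, ∀ _h : t ≤ m,
      (subBlock X (2 * t - 1) 2 (by omega)).det = 1) :
    X.det = X ⟨0, by omega⟩ ⟨0, by omega⟩ *
      (subBlock X (2 * m + 1) (n - (2 * m + 1)) (by omega)).det := by
  have hbt : X.BlockTriangular (fun i : Fin n => blkIdx m i.val) :=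
    fun i j hij => hX i j (ne_of_gt hij)
  rw [hbt.det]
  have him : Finset.univ.image (fun i : Fin n => blkIdx m i.val) = Finset.range (m + 2) := by
    ext v
    simp only [Finset.mem_image, Finset.mem_univ, true_and, Finset.mem_range]
    constructor
    · rintro ⟨i, rfl⟩
      unfold blkIdx
      split_ifs <;> omega
    · intro hv
      by_cases c : v = m + 1
      · refine ⟨⟨2 * m + 1, by omega⟩, ?_⟩
        simp [blkIdx, c]
      · refine ⟨⟨2 * v, by omega⟩, ?_⟩
        unfold blkIdx
        split_ifs <;> simp at * <;> omega
  rw [him, Finset.prod_range_succ, Finset.prod_range_succ', det_sub (isBlk_zero n m) (by omega),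
    det_sub (isBlk_last n m hn) (by omega), Finset.prod_eq_one, one_mul]
  · congr 1
    rw [Matrix.det_fin_one]
    rfl
  · intro t ht
    rw [Finset.mem_range] at ht
    rw [det_sub (isBlk_mid n m (t + 1) (by omega) (by omega)) (by omega)]
    exact hmid _ (by omega) (by omega)

lemma BD_Bflag (n m k : ℕ) : BD m (Bflag n m k) := by
  intro i j hij
  have key : ¬ i = j := fun e => hij (by rw [e])
  simp only [Bflag, of_apply]
  unfold blkIdx at hij
  rw [if_neg, if_neg, if_neg, if_neg, if_neg]
  · tauto
  · intro h; split_ifs at hij <;> omega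
  · intro h; split_ifs at hij <;> omega
  · tauto
  · intro h; split_ifs at hij <;> omega

noncomputable def rot (θ : ℝ) : Matrix (Fin 2) (Fin 2) ℝ :=
  !![Real.cos θ, Real.sin θ; -Real.sin θ, Real.cos θ]

lemma rot_pow (θ : ℝ) (k : ℕ) : rot θ ^ k = rot (k * θ) := by
  induction k with
  | zero => ext i j; fin_cases i <;> fin_cases j <;> simp [rot]
  | succ k ih =>
    rw [pow_succ, ih]
    have : ((k + 1 : ℕ) : ℝ) * θ = k * θ + θ := by push_cast; ring
    rw [this]
    ext i j
    fin_cases i <;> fin_cases j <;>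
      simp [rot, Matrix.mul_apply, Fin.sum_univ_two, Real.cos_add, Real.sin_add] <;> ring

lemma rot_orth (θ : ℝ) : (rot θ)ᵀ * rot θ = 1 := by
  have := Real.sin_sq_add_cos_sq θ
  ext i j
  fin_cases i <;> fin_cases j <;>
    simp [rot, Matrix.mul_apply, Fin.sum_univ_two] <;> linarith

lemma B_zero (n m k : ℕ) (h : 0 + 1 ≤ n) : subBlock (Bflag n m k) 0 1 h = 1 := by
  ext i j
  fin_cases i; fin_cases j
  simp [subBlock, Bflag]

lemma B_mid (n m k t : ℕ) (h1 : 1 ≤ t) (h2 : t ≤ m) (h : 2 * t - 1 + 2 ≤ n) :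
    subBlock (Bflag n m k) (2 * t - 1) 2 h = rot (2 * Real.pi * t / k) := by
  have e1 : (2 * t - 1 + 1) / 2 = t := by omega
  have e2 : (2 * t + 1) / 2 = t := by omega
  have e3 : 2 * t - 1 + 1 = 2 * t := by omega
  have e4 : 2 * t / 2 = t := by omega
  ext i j
  fin_cases i <;> fin_cases j <;>
    simp only [subBlock, Bflag, rot, of_apply, submatrix_apply, Fin.ext_iff, Fin.zero_eta, Fin.mk_one,
      Fin.isValue, Fin.val_zero, Fin.val_one, add_zero, e2, e3, e4, cons_val', cons_val_zero, cons_val_one,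
      cons_val_fin_one]
  · rw [if_neg (by omega), if_pos (by first | omega | (simp only [and_true, true_and]; omega))]
  · rw [if_neg (by omega), if_neg (by omega), if_pos (by first | omega | (simp only [and_true, true_and]; omega))]
  · rw [if_neg (by omega), if_neg (by omega), if_neg (by omega), if_pos (by first | omega | (simp only [and_true, true_and]; omega))]
  · rw [if_neg (by omega), if_pos (by first | omega | (simp only [and_true, true_and]; omega))]

lemma B_last (n m k : ℕ) (h : 2 * m + 1 + (n - (2 * m + 1)) ≤ n) :
    subBlock (Bflag n m k) (2 * m + 1) (n - (2 * m + 1)) h = -1 := by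
  ext i j
  simp only [subBlock, Bflag, of_apply, submatrix_apply, Fin.mk.injEq, Matrix.neg_apply,
    Matrix.one_apply, Fin.ext_iff]
  rw [if_neg (by omega), if_neg (by omega), if_neg (by omega), if_neg (by omega)]
  by_cases c : i.val = j.val
  · rw [if_pos (by omega), if_pos c]
  · rw [if_neg (by omega), if_neg c, neg_zero]

lemma so2_form (X : Matrix (Fin 2) (Fin 2) ℝ) (h : Xᵀ * X = 1) (hd : X.det = 1) :
    X 0 0 = X 1 1 ∧ X 0 1 = - X 1 0 := by
  have h0 := congrFun (congrFun h 0) 0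
  have h1 := congrFun (congrFun h 1) 1
  simp [Matrix.mul_apply, Fin.sum_univ_two] at h0 h1
  rw [Matrix.det_fin_two] at hd
  constructor <;> nlinarith [sq_nonneg (X 0 0 - X 1 1), sq_nonneg (X 0 1 + X 1 0)]

lemma so2_comm (X : Matrix (Fin 2) (Fin 2) ℝ) (h : Xᵀ * X = 1) (hd : X.det = 1) (θ : ℝ) :
    X * rot θ = rot θ * X := by
  obtain ⟨h0, h1⟩ := so2_form X h hd
  ext i j
  fin_cases i <;> fin_cases j <;>
    simp [rot, Matrix.mul_apply, Fin.sum_univ_two, h0, h1] <;> ring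

lemma so2_of_comm (X : Matrix (Fin 2) (Fin 2) ℝ) (h : Xᵀ * X = 1) (θ : ℝ)
    (hs : Real.sin θ ≠ 0) (hc : X * rot θ = rot θ * X) : X.det = 1 := by
  have h0 := congrFun (congrFun h 0) 0
  have c0 := congrFun (congrFun hc 0) 0
  have c1 := congrFun (congrFun hc 0) 1
  simp [rot, Matrix.mul_apply, Fin.sum_univ_two] at h0 c0 c1
  have e1 : X 0 1 = - X 1 0 := by
    apply mul_right_cancel₀ hs; linarith
  have e2 : X 1 1 = X 0 0 := by
    apply mul_right_cancel₀ hs; linarith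
  rw [Matrix.det_fin_two, e1, e2]; linarith

lemma comm_of_blocks {n m k : ℕ} (hn : 2 * m + 2 ≤ n) (A : Matrix (Fin n) (Fin n) ℝ)
    (hA : BD m A)
    (h : ∀ t : ℕ, ∀ _ht1 : 1 ≤ t, ∀ _ht : t ≤ m,
        (subBlock A (2 * t - 1) 2 (by omega))ᵀ *
           subBlock A (2 * t - 1) 2 (by omega) = 1 ∧
        (subBlock A (2 * t - 1) 2 (by omega)).det = 1) :
    A * Bflag n m k = Bflag n m k * A := by
  have hB := BD_Bflag n m k
  apply BD.ext hn (hA.mul hB) (hB.mul hA)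
  · rw [sb_mul (isBlk_zero n m) _ _ _ hA, sb_mul (isBlk_zero n m) _ _ _ hB, B_zero, mul_one, one_mul]
  · intro t h1 h2
    rw [sb_mul (isBlk_mid n m t h1 h2) _ _ _ hA, sb_mul (isBlk_mid n m t h1 h2) _ _ _ hB,
      B_mid n m k t h1 h2]
    exact so2_comm _ (h t h1 h2).1 (h t h1 h2).2 _
  · rw [sb_mul (isBlk_last n m hn) _ _ _ hA, sb_mul (isBlk_last n m hn) _ _ _ hB, B_last]
    simp

lemma B_orth (n m k : ℕ) (hn : 2 * m + 2 ≤ n) : (Bflag n m k)ᵀ * Bflag n m k = 1 := by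
  have hB := BD_Bflag n m k
  apply BD.ext hn (hB.transpose.mul hB) BD.one
  · rw [sb_mul (isBlk_zero n m) _ _ _ hB.transpose, sub_transpose, B_zero, sub_one]; simp
  · intro t h1 h2
    rw [sb_mul (isBlk_mid n m t h1 h2) _ _ _ hB.transpose, sub_transpose, B_mid n m k t h1 h2,
      sub_one, rot_orth]
  · rw [sb_mul (isBlk_last n m hn) _ _ _ hB.transpose, sub_transpose, B_last, sub_one]; simp

lemma B_pow (n m k : ℕ) (hn : 2 * m + 2 ≤ n) (hk : Even k) (hkm : 2 * m + 2 ≤ k) :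
    Bflag n m k ^ k = 1 := by
  have hB := BD_Bflag n m k
  apply BD.ext hn (hB.pow k) BD.one
  · rw [sb_pow (isBlk_zero n m) _ _ hB, B_zero, sub_one, one_pow]
  · intro t h1 h2
    rw [sb_pow (isBlk_mid n m t h1 h2) _ _ hB, B_mid n m k t h1 h2, sub_one, rot_pow]
    have hk0 : (k : ℝ) ≠ 0 := by
      have : k ≠ 0 := by omega
      exact_mod_cast this
    have e : (k : ℝ) * (2 * Real.pi * t / k) = t * (2 * Real.pi) := by field_simp
    have hs : Real.sin (t * (2 * Real.pi)) = 0 := by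
      have := Real.sin_nat_mul_pi (2 * t)
      rw [← this]; congr 1; push_cast; ring
    have hc := Real.cos_nat_mul_two_pi t
    rw [e]
    ext i j
    fin_cases i <;> fin_cases j <;> simp [rot, hs, hc]
  · rw [sb_pow (isBlk_last n m hn) _ _ hB, B_last, sub_one, hk.neg_one_pow]

noncomputable def ang (m k v : ℕ) : ℝ := if v ≤ m then 2 * Real.pi * v / k else Real.pi

lemma ang_lt {m k v : ℕ} (hkm : 2 * m + 2 ≤ k) (hv : v ≤ m) :
    2 * Real.pi * v / k < Real.pi := by
  have hk0 : (0 : ℝ) < k := by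
    have : 0 < k := by omega
    exact_mod_cast this
  rw [div_lt_iff₀ hk0]
  have : 2 * (v : ℝ) < k := by
    have : 2 * v < k := by omega
    exact_mod_cast this
  nlinarith [Real.pi_pos]

lemma ang_nonneg (k v : ℕ) : 0 ≤ 2 * Real.pi * v / k := by
  have := Real.pi_pos
  positivity

lemma ang_inj {m k v w : ℕ} (hkm : 2 * m + 2 ≤ k) (hv : v ≤ m + 1) (hw : w ≤ m + 1)
    (h : Real.cos (ang m k v) = Real.cos (ang m k w)) : v = w := by
  have hk0 : (0 : ℝ) < k := by
    have : 0 < k := by omega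
    exact_mod_cast this
  have mem : ∀ v, ang m k v ∈ Set.Icc 0 Real.pi := by
    intro v
    unfold ang
    split_ifs with c
    · exact ⟨ang_nonneg k v, (ang_lt hkm c).le⟩
    · exact ⟨Real.pi_pos.le, le_rfl⟩
  have := Real.injOn_cos (mem v) (mem w) h
  unfold ang at this
  split_ifs at this with c d d
  · rw [div_left_inj' hk0.ne'] at this
    have := mul_left_cancel₀ (by have := Real.pi_pos; positivity) this
    exact_mod_cast this
  · exact absurd this (ang_lt hkm c).ne
  · exact absurd this.symm (ang_lt hkm d).ne
  · omega

lemma B_add (n m k : ℕ) (hn : 2 * m + 2 ≤ n) :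
    Bflag n m k + (Bflag n m k)ᵀ
      = diagonal (fun i : Fin n => 2 * Real.cos (ang m k (blkIdx m i.val))) := by
  have hB := BD_Bflag n m k
  have sd : ∀ v a b (hb : IsBlk n m v a b) (h : a + b ≤ n),
      subBlock (diagonal (fun i : Fin n => 2 * Real.cos (ang m k (blkIdx m i.val)))) a b h
        = diagonal (fun _ => 2 * Real.cos (ang m k v)) := by
    intro v a b hb h
    ext i j
    have := (hb (a + i.val) (by have := i.isLt; omega)).2 ⟨by simp, by simp⟩
    simp [subBlock, diagonal_apply, Fin.ext_iff, this]
  have sa : ∀ a b (h : a + b ≤ n), subBlock (Bflag n m k + (Bflag n m k)ᵀ) a b h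
      = subBlock (Bflag n m k) a b h + (subBlock (Bflag n m k) a b h)ᵀ := fun _ _ _ => rfl
  apply BD.ext hn (hB.add hB.transpose) (BD.diag _)
  · rw [sa, B_zero, sd _ _ _ (isBlk_zero n m)]
    ext i j
    fin_cases i; fin_cases j
    simp [ang]; norm_num
  · intro t h1 h2
    rw [sa, B_mid n m k t h1 h2, sd _ _ _ (isBlk_mid n m t h1 h2)]
    ext i j
    fin_cases i <;> fin_cases j <;> simp [ang, rot, h2] <;> ring
  · rw [sa, B_last, sd _ _ _ (isBlk_last n m hn)]
    ext i j
    by_cases c : i = j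
    · simp [c, ang]; norm_num
    · simp [c, Matrix.one_apply, Ne.symm c]

lemma BD_of_comm (n m k : ℕ) (hn : 2 * m + 2 ≤ n) (hkm : 2 * m + 2 ≤ k)
    (A : Matrix (Fin n) (Fin n) ℝ) (hc : A * Bflag n m k = Bflag n m k * A) : BD m A := by
  have h1 := B_orth n m k hn
  have h2 : Bflag n m k * (Bflag n m k)ᵀ = 1 := mul_eq_one_comm.1 h1
  have hct : A * (Bflag n m k)ᵀ = (Bflag n m k)ᵀ * A := by
    calc A * (Bflag n m k)ᵀ = ((Bflag n m k)ᵀ * Bflag n m k) * A * (Bflag n m k)ᵀ := by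
          rw [h1, one_mul]
      _ = (Bflag n m k)ᵀ * (A * Bflag n m k) * (Bflag n m k)ᵀ := by
          rw [hc]; simp only [mul_assoc]
      _ = (Bflag n m k)ᵀ * A * (Bflag n m k * (Bflag n m k)ᵀ) := by simp only [mul_assoc]
      _ = _ := by rw [h2, mul_one]
  have hs : A * (Bflag n m k + (Bflag n m k)ᵀ) = (Bflag n m k + (Bflag n m k)ᵀ) * A := by
    rw [mul_add, add_mul, hc, hct]
  rw [B_add n m k hn] at hs
  have bd : ∀ i, blkIdx m i ≤ m + 1 := by
    intro i; unfold blkIdx; split_ifs <;> omega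
  intro i j hij
  have := congrFun (congrFun hs i) j
  rw [Matrix.mul_diagonal, Matrix.diagonal_mul] at this
  by_contra hne
  apply hij
  apply ang_inj hkm (bd _) (bd _)
  have := mul_left_cancel₀ hne (this.trans (mul_comm _ _))
  linarith

/-- Let `m ≥ 1`, let `k` be even with `k ≥ 2m+2`, and `n ≥ 2m+2`. The
matrix `B = diag(1, ε₁, …, ε_m, -1, …, -1)` is orthogonal, satisfies `B^k = 1`, and the
fixed points of `Φ : A ↦ BAB⁻¹` in `SO(n)`, i.e. `{A ∈ SO(n) : AB = BA}`, are exactly the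
block-diagonal matrices `diag(a, A₁, …, A_m, A')` with `a ∈ {1,-1}`, `A_t ∈ SO(2)`,
`A' ∈ O(n-2m-1)` and `a·det A' = 1`. In particular the fixed-point group contains the
subgroup `H = SO(2)^m × SO(n-2m-1)` (taking `a = 1`), so `SO(n)/SO(2)^m × SO(n-2m-1)` is a
homogeneous Φ-space generated by an inner automorphism of order `k`. -/
theorem statement1 (n m k : ℕ) (hm : 1 ≤ m) (hk : Even k) (hkm : 2 * m + 2 ≤ k)
    (hn : 2 * m + 2 ≤ n) :
    -- B is orthogonal
    (Bflag n m k)ᵀ * Bflag n m k = 1 ∧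
    -- B^k = 1
    (Bflag n m k) ^ k = 1 ∧
    -- description of the fixed-point set {A ∈ SO(n) : AB = BA}
    (∀ A : Matrix (Fin n) (Fin n) ℝ, Aᵀ * A = 1 → A.det = 1 →
      (A * Bflag n m k = Bflag n m k * A ↔
        ((∀ i j : Fin n, blkIdx m i.val ≠ blkIdx m j.val → A i j = 0) ∧
         (∀ i j : Fin n, i.val = 0 → j.val = 0 → (A i j = 1 ∨ A i j = -1)) ∧
         (∀ t : ℕ, ∀ _ht1 : 1 ≤ t, ∀ _ht : t ≤ m,
           (subBlock A (2 * t - 1) 2 (by omega))ᵀ *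
              subBlock A (2 * t - 1) 2 (by omega) = 1 ∧
           (subBlock A (2 * t - 1) 2 (by omega)).det = 1) ∧
         (subBlock A (2 * m + 1) (n - (2 * m + 1)) (by omega))ᵀ *
            subBlock A (2 * m + 1) (n - (2 * m + 1)) (by omega) = 1 ∧
         (∀ i j : Fin n, i.val = 0 → j.val = 0 →
           A i j * (subBlock A (2 * m + 1) (n - (2 * m + 1)) (by omega)).det = 1)))) ∧
    -- the fixed-point group contains H = SO(2)^m × SO(n-2m-1)
    (∀ A : Matrix (Fin n) (Fin n) ℝ,
      (∀ i j : Fin n, blkIdx m i.val ≠ blkIdx m j.val → A i j = 0) →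
      (∀ i j : Fin n, i.val = 0 → j.val = 0 → A i j = 1) →
      (∀ t : ℕ, ∀ _ht1 : 1 ≤ t, ∀ _ht : t ≤ m,
        (subBlock A (2 * t - 1) 2 (by omega))ᵀ *
           subBlock A (2 * t - 1) 2 (by omega) = 1 ∧
        (subBlock A (2 * t - 1) 2 (by omega)).det = 1) →
      ((subBlock A (2 * m + 1) (n - (2 * m + 1)) (by omega))ᵀ *
          subBlock A (2 * m + 1) (n - (2 * m + 1)) (by omega) = 1 ∧
       (subBlock A (2 * m + 1) (n - (2 * m + 1)) (by omega)).det = 1) →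
      (Aᵀ * A = 1 ∧ A.det = 1 ∧ A * Bflag n m k = Bflag n m k * A)) := by
  have hBD := BD_Bflag n m k
  refine ⟨B_orth n m k hn, B_pow n m k hn hk hkm, ?_, ?_⟩
  · intro A hA hdet
    constructor
    · intro hc
      have hb : BD m A := BD_of_comm n m k hn hkm A hc
      have orth : ∀ v a b (_ : IsBlk n m v a b) (h : a + b ≤ n),
          (subBlock A a b h)ᵀ * subBlock A a b h = 1 := by
        intro v a b hv h
        rw [← sub_transpose, ← sb_mul hv h _ _ hb.transpose, hA, sub_one]
      have mid : ∀ t : ℕ, ∀ _ht1 : 1 ≤ t, ∀ _ht : t ≤ m,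
           (subBlock A (2 * t - 1) 2 (by omega))ᵀ *
              subBlock A (2 * t - 1) 2 (by omega) = 1 ∧
           (subBlock A (2 * t - 1) 2 (by omega)).det = 1 := by
        intro t h1 h2
        have ho := orth t _ _ (isBlk_mid n m t h1 h2) (by omega)
        refine ⟨ho, so2_of_comm _ ho (2 * Real.pi * t / k) ?_ ?_⟩
        · apply ne_of_gt
          apply Real.sin_pos_of_pos_of_lt_pi
          · have := Real.pi_pos
            have h3 : (0 : ℝ) < t := by exact_mod_cast h1
            have h4 : (0 : ℝ) < k := by
              have : 0 < k := by omega
              exact_mod_cast this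
            positivity
          · exact ang_lt hkm h2
        · rw [← B_mid n m k t h1 h2 (by omega), ← sb_mul (isBlk_mid n m t h1 h2) _ _ _ hb,
            ← sb_mul (isBlk_mid n m t h1 h2) _ _ _ hBD, hc]
      refine ⟨hb, ?_, mid, orth _ _ _ (isBlk_last n m hn) _, ?_⟩
      · intro i j hi hj
        have h0 := congrFun (congrFun (orth _ _ _ (isBlk_zero n m) (by omega)) 0) 0
        have ei : i = ⟨0, Nat.lt_of_lt_of_le (Nat.succ_pos _) hn⟩ := Fin.ext hi
        have ej : j = ⟨0, Nat.lt_of_lt_of_le (Nat.succ_pos _) hn⟩ := Fin.ext hj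
        simp [subBlock, Matrix.mul_apply] at h0
        rw [ei, ej]
        exact mul_self_eq_one_iff.1 h0
      · intro i j hi hj
        have ei : i = ⟨0, Nat.lt_of_lt_of_le (Nat.succ_pos _) hn⟩ := Fin.ext hi
        have ej : j = ⟨0, Nat.lt_of_lt_of_le (Nat.succ_pos _) hn⟩ := Fin.ext hj
        rw [ei, ej, ← hb.det_eq hn (fun t h1 h2 => (mid t h1 h2).2), hdet]
    · rintro ⟨hb, _, hmid, _⟩
      exact comm_of_blocks hn A hb hmid
  · intro A hb h0 hmid hlast
    have hb' : BD m A := hb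
    refine ⟨?_, ?_, comm_of_blocks hn A hb hmid⟩
    · apply BD.ext hn (hb'.transpose.mul hb') BD.one
      · rw [sb_mul (isBlk_zero n m) _ _ _ hb'.transpose, sub_transpose, sub_one]
        ext i j
        fin_cases i; fin_cases j
        have := h0 ⟨0, by omega⟩ ⟨0, by omega⟩ rfl rfl
        simp [Matrix.mul_apply, subBlock, this]
      · intro t h1 h2
        rw [sb_mul (isBlk_mid n m t h1 h2) _ _ _ hb'.transpose, sub_transpose, sub_one]
        exact (hmid t h1 h2).1
      · rw [sb_mul (isBlk_last n m hn) _ _ _ hb'.transpose, sub_transpose, sub_one]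
        exact hlast.1
    · rw [hb'.det_eq hn (fun t h1 h2 => (hmid t h1 h2).2), h0 _ _ rfl rfl, hlast.2, one_mul]
end

section
/- The subspaces 𝔪₁, 𝔪₂, 𝔪₃ satisfy the bracket relations [𝔪₁, 𝔪₂] ⊆ 𝔪₃, [𝔪₂, 𝔪₃] ⊆ 𝔪₁, and [𝔪₃, 𝔪₁] ⊆ 𝔪₂ (i.e. [𝔪_i, 𝔪_{i+1}] ⊆ 𝔪_{i+2} with indices modulo 3). -/
open Matrix

namespace FlagMfld

variable {n : ℕ}

/-- Membership in `so(n)`: real skew-symmetric `n×n` matrices. -/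
def inSO (X : Matrix (Fin n) (Fin n) ℝ) : Prop := Xᵀ = -X

/-- The isotropy subalgebra `𝔥 ≅ so(2) ⊕ so(n-3)`: skew matrices whose only (possibly)
nonzero entries are `H₂₃`, `H₃₂` and `H_{ij}` with `i,j ≥ 4` (1-based indexing; indices are
0-based in the formalization, so the allowed positions are `(1,2)`, `(2,1)` and `i,j ≥ 3`). -/
def inH (X : Matrix (Fin n) (Fin n) ℝ) : Prop :=
  Xᵀ = -X ∧ ∀ i j : Fin n, X i j ≠ 0 →
    (i.val = 1 ∧ j.val = 2) ∨ (i.val = 2 ∧ j.val = 1) ∨ (3 ≤ i.val ∧ 3 ≤ j.val)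

/-- The canonical reductive complement `𝔪`: skew matrices with `S₂₃ = 0` and `S_{ij} = 0`
for all `i,j ≥ 4` (1-based). -/
def inM (X : Matrix (Fin n) (Fin n) ℝ) : Prop :=
  Xᵀ = -X ∧ (∀ i j : Fin n, i.val = 1 → j.val = 2 → X i j = 0) ∧
    ∀ i j : Fin n, 3 ≤ i.val → 3 ≤ j.val → X i j = 0

/-- `𝔪₁`: only `S₁₂`, `S₁₃` (and skew partners) may be nonzero. -/
def inM1 (X : Matrix (Fin n) (Fin n) ℝ) : Prop :=
  Xᵀ = -X ∧ ∀ i j : Fin n, X i j ≠ 0 →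
    (i.val = 0 ∧ (j.val = 1 ∨ j.val = 2)) ∨ (j.val = 0 ∧ (i.val = 1 ∨ i.val = 2))

/-- `𝔪₂`: only `S_{2j}`, `S_{3j}` for `j ≥ 4` (and skew partners) may be nonzero. -/
def inM2 (X : Matrix (Fin n) (Fin n) ℝ) : Prop :=
  Xᵀ = -X ∧ ∀ i j : Fin n, X i j ≠ 0 →
    ((i.val = 1 ∨ i.val = 2) ∧ 3 ≤ j.val) ∨ ((j.val = 1 ∨ j.val = 2) ∧ 3 ≤ i.val)

/-- `𝔪₃`: only `S_{1j}` for `j ≥ 4` (and skew partners) may be nonzero. -/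
def inM3 (X : Matrix (Fin n) (Fin n) ℝ) : Prop :=
  Xᵀ = -X ∧ ∀ i j : Fin n, X i j ≠ 0 →
    (i.val = 0 ∧ 3 ≤ j.val) ∨ (j.val = 0 ∧ 3 ≤ i.val)

/-- Component along `𝔪₁` of the decomposition `𝔪 = 𝔪₁ ⊕ 𝔪₂ ⊕ 𝔪₃` (entrywise). -/
def p1 (X : Matrix (Fin n) (Fin n) ℝ) : Matrix (Fin n) (Fin n) ℝ :=
  Matrix.of fun i j =>
    if (i.val = 0 ∧ (j.val = 1 ∨ j.val = 2)) ∨ (j.val = 0 ∧ (i.val = 1 ∨ i.val = 2))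
    then X i j else 0

/-- Component along `𝔪₂`. -/
def p2 (X : Matrix (Fin n) (Fin n) ℝ) : Matrix (Fin n) (Fin n) ℝ :=
  Matrix.of fun i j =>
    if ((i.val = 1 ∨ i.val = 2) ∧ 3 ≤ j.val) ∨ ((j.val = 1 ∨ j.val = 2) ∧ 3 ≤ i.val)
    then X i j else 0

/-- Component along `𝔪₃`. -/
def p3 (X : Matrix (Fin n) (Fin n) ℝ) : Matrix (Fin n) (Fin n) ℝ :=
  Matrix.of fun i j =>
    if (i.val = 0 ∧ 3 ≤ j.val) ∨ (j.val = 0 ∧ 3 ≤ i.val) then X i j else 0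

/-- Projection of `so(n)` onto `𝔪` along `𝔥` (kills the entries at `𝔥`-positions). -/
def pM (X : Matrix (Fin n) (Fin n) ℝ) : Matrix (Fin n) (Fin n) ℝ :=
  Matrix.of fun i j =>
    if (i.val = 1 ∧ j.val = 2) ∨ (i.val = 2 ∧ j.val = 1) ∨ (3 ≤ i.val ∧ 3 ≤ j.val)
    then 0 else X i j

/-- Matrix commutator `[X,Y] = XY - YX`. -/
def br (X Y : Matrix (Fin n) (Fin n) ℝ) : Matrix (Fin n) (Fin n) ℝ := X * Y - Y * X

/-- The naturally reductive metric `g₀(X,Y) = (n-1)·Tr(XᵀY)`. -/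
noncomputable def g0 (X Y : Matrix (Fin n) (Fin n) ℝ) : ℝ :=
  ((n : ℝ) - 1) * (Xᵀ * Y).trace

/-- The invariant metric with characteristic numbers `(s,t)`:
`g_{s,t}(X,Y) = g₀(X₁,Y₁) + s·g₀(X₂,Y₂) + t·g₀(X₃,Y₃)`. -/
noncomputable def gst (s t : ℝ) (X Y : Matrix (Fin n) (Fin n) ℝ) : ℝ :=
  g0 (p1 X) (p1 Y) + s * g0 (p2 X) (p2 Y) + t * g0 (p3 X) (p3 Y)

/-- The symmetric part `U_{s,t}` of the Nomizu function of the Levi-Civita connection of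
`g_{s,t}`. -/
noncomputable def Ust (s t : ℝ) (X Y : Matrix (Fin n) (Fin n) ℝ) :
    Matrix (Fin n) (Fin n) ℝ :=
  ((t - s) / 2) • (br (p2 X) (p3 Y) + br (p2 Y) (p3 X)) +
  ((t - 1) / (2 * s)) • (br (p1 X) (p3 Y) + br (p1 Y) (p3 X)) +
  ((s - 1) / (2 * t)) • (br (p1 X) (p2 Y) + br (p1 Y) (p2 X))

/-- The block-diagonal matrix `B₄ = diag(1, [[0,1],[-1,0]], -1, …, -1)`. -/
def B4 : Matrix (Fin n) (Fin n) ℝ :=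
  Matrix.of fun i j =>
    if i.val = 0 ∧ j.val = 0 then 1
    else if i.val = 1 ∧ j.val = 2 then 1
    else if i.val = 2 ∧ j.val = 1 then -1
    else if 3 ≤ i.val ∧ i = j then -1
    else 0

/-- `θ = dΦ|𝔪` for the order-4 automorphism: `θ(X) = B₄ X B₄ᵀ`. -/
def th4 (X : Matrix (Fin n) (Fin n) ℝ) : Matrix (Fin n) (Fin n) ℝ := B4 * X * B4ᵀ

/-- The canonical f-structure `f₀ = (1/2)(θ - θ³)` of the 4-symmetric space. -/
noncomputable def f0 (X : Matrix (Fin n) (Fin n) ℝ) : Matrix (Fin n) (Fin n) ℝ :=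
  (1 / 2 : ℝ) • (th4 X - th4 (th4 (th4 X)))

/-- The block-diagonal matrix `B₆ = diag(1, [[1/2,√3/2],[-√3/2,1/2]], -1, …, -1)`. -/
noncomputable def B6 : Matrix (Fin n) (Fin n) ℝ :=
  Matrix.of fun i j =>
    if i.val = 0 ∧ j.val = 0 then 1
    else if i.val = 1 ∧ j.val = 1 then 1 / 2
    else if i.val = 1 ∧ j.val = 2 then Real.sqrt 3 / 2
    else if i.val = 2 ∧ j.val = 1 then -(Real.sqrt 3 / 2)
    else if i.val = 2 ∧ j.val = 2 then 1 / 2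
    else if 3 ≤ i.val ∧ i = j then -1
    else 0

/-- `θ = dΦ|𝔪` for the order-6 automorphism: `θ(X) = B₆ X B₆ᵀ`. -/
noncomputable def th6 (X : Matrix (Fin n) (Fin n) ℝ) : Matrix (Fin n) (Fin n) ℝ :=
  B6 * X * B6ᵀ

/-- `f₁ = (1/√3)(θ - θ⁵)`. -/
noncomputable def f1 (X : Matrix (Fin n) (Fin n) ℝ) : Matrix (Fin n) (Fin n) ℝ :=
  (1 / Real.sqrt 3) • (th6 X - th6 (th6 (th6 (th6 (th6 X)))))

/-- `f₂ = (1/(2√3))(θ - θ² + θ⁴ - θ⁵)`. -/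
noncomputable def f2 (X : Matrix (Fin n) (Fin n) ℝ) : Matrix (Fin n) (Fin n) ℝ :=
  (1 / (2 * Real.sqrt 3)) •
    (th6 X - th6 (th6 X) + th6 (th6 (th6 (th6 X))) - th6 (th6 (th6 (th6 (th6 X)))))

/-- `f₃ = (1/(2√3))(θ + θ² - θ⁴ - θ⁵)`. -/
noncomputable def f3 (X : Matrix (Fin n) (Fin n) ℝ) : Matrix (Fin n) (Fin n) ℝ :=
  (1 / (2 * Real.sqrt 3)) •
    (th6 X + th6 (th6 X) - th6 (th6 (th6 (th6 X))) - th6 (th6 (th6 (th6 (th6 X)))))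

/-- `f₄ = (1/√3)(θ² - θ⁴)`. -/
noncomputable def f4 (X : Matrix (Fin n) (Fin n) ℝ) : Matrix (Fin n) (Fin n) ℝ :=
  (1 / Real.sqrt 3) • (th6 (th6 X) - th6 (th6 (th6 (th6 X))))

/-- The Killing f-structure condition for `f` w.r.t. the metric with characteristic
numbers `(s,t)`: `(1/2)[X, fX]_𝔪 + U_{s,t}(X, fX) - f(U_{s,t}(X,X)) = 0` for all `X ∈ 𝔪`. -/
def killCond (s t : ℝ) (f : Matrix (Fin n) (Fin n) ℝ → Matrix (Fin n) (Fin n) ℝ) : Prop :=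
  ∀ X : Matrix (Fin n) (Fin n) ℝ, inM X →
    (1 / 2 : ℝ) • pM (br X (f X)) + Ust s t X (f X) - f (Ust s t X X) = 0

/-- The nearly Kähler f-structure condition:
`(1/2)[fX, f²X]_𝔪 + U_{s,t}(fX, f²X) - f(U_{s,t}(fX, fX)) = 0` for all `X ∈ 𝔪`. -/
def nkCond (s t : ℝ) (f : Matrix (Fin n) (Fin n) ℝ → Matrix (Fin n) (Fin n) ℝ) : Prop :=
  ∀ X : Matrix (Fin n) (Fin n) ℝ, inM X →
    (1 / 2 : ℝ) • pM (br (f X) (f (f X))) + Ust s t (f X) (f (f X)) -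
      f (Ust s t (f X) (f X)) = 0

/-- The `G₁f` condition:
`f(2·U_{s,t}(fX, f²X) - f(U_{s,t}(fX, fX)) + f(U_{s,t}(f²X, f²X))) = 0` for all `X ∈ 𝔪`. -/
def g1Cond (s t : ℝ) (f : Matrix (Fin n) (Fin n) ℝ → Matrix (Fin n) (Fin n) ℝ) : Prop :=
  ∀ X : Matrix (Fin n) (Fin n) ℝ, inM X →
    f ((2 : ℝ) • Ust s t (f X) (f (f X)) - f (Ust s t (f X) (f X)) +
      f (Ust s t (f (f X)) (f (f X)))) = 0

end FlagMfld

open FlagMfld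

theorem FlagMfld.br_skew_aux {n : ℕ} {X Y : Matrix (Fin n) (Fin n) ℝ}
    (hX : Xᵀ = -X) (hY : Yᵀ = -Y) : (br X Y)ᵀ = -(br X Y) := by
  unfold br
  rw [Matrix.transpose_sub, Matrix.transpose_mul, Matrix.transpose_mul, hX, hY]
  simp

theorem FlagMfld.br_ne_aux {n : ℕ} {X Y : Matrix (Fin n) (Fin n) ℝ} {i j : Fin n}
    (h : br X Y i j ≠ 0) :
    ∃ k, (X i k ≠ 0 ∧ Y k j ≠ 0) ∨ (Y i k ≠ 0 ∧ X k j ≠ 0) := by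
  unfold br at h
  rw [Matrix.sub_apply, Matrix.mul_apply, Matrix.mul_apply, ← Finset.sum_sub_distrib] at h
  obtain ⟨k, -, hk⟩ := Finset.exists_ne_zero_of_sum_ne_zero h
  refine ⟨k, ?_⟩
  by_contra hc
  apply hk
  simp only [not_or, ← mul_ne_zero_iff, not_not, ne_eq] at hc
  rw [hc.1, hc.2, sub_zero]

/-- `[𝔪₁,𝔪₂] ⊆ 𝔪₃`, `[𝔪₂,𝔪₃] ⊆ 𝔪₁`, `[𝔪₃,𝔪₁] ⊆ 𝔪₂`. -/
theorem statement4 (n : ℕ) (hn : 4 ≤ n) :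
    (∀ X Y : Matrix (Fin n) (Fin n) ℝ, inM1 X → inM2 Y → inM3 (br X Y)) ∧
    (∀ X Y : Matrix (Fin n) (Fin n) ℝ, inM2 X → inM3 Y → inM1 (br X Y)) ∧
    (∀ X Y : Matrix (Fin n) (Fin n) ℝ, inM3 X → inM1 Y → inM2 (br X Y)) := by
  refine ⟨?_, ?_, ?_⟩ <;>
  · rintro X Y ⟨hX, hX'⟩ ⟨hY, hY'⟩
    refine ⟨br_skew_aux hX hY, fun i j h => ?_⟩
    obtain ⟨k, ⟨h1, h2⟩ | ⟨h1, h2⟩⟩ := br_ne_aux h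
    · have := hX' _ _ h1
      have := hY' _ _ h2
      omega
    · have := hY' _ _ h1
      have := hX' _ _ h2
      omega
end

section
/- Let V be a finite-dimensional real vector space and θ : V → V a linear map with θ⁶ = id. Then each of the operators f₁ := (1/√3)(θ − θ⁵), f₂ := (1/(2√3))(θ − θ² + θ⁴ − θ⁵), f₃ := (1/(2√3))(θ + θ² − θ⁴ − θ⁵), f₄ := (1/√3)(θ² − θ⁴) satisfies f³ + f = 0 (i.e. each is an f-structure). Moreover P₃ := θ³ satisfies P₃² = id, and if in addition θ has no nonzero fixed vector, then P₂ := (1/3)θ + θ² + (1/3)θ³ + θ⁴ + (1/3)θ⁵ satisfies P₂² = id. These are among the canonical f-structures and canonical almost product structures of a homogeneous Φ-space of order 6. -/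
theorem aux_cube {A : Type*} [Ring A] [Algebra ℝ A] (c : ℝ) (g : A) (k : ℝ) (hk : c ^ 2 * k = 1)
    (h : g ^ 3 + k • g = 0) : (c • g) ^ 3 + c • g = 0 := by
  rw [smul_pow, eq_neg_of_add_eq_zero_left h, smul_neg, smul_smul]
  have : c ^ 3 * k = c := by linear_combination c * hk
  rw [this]; simp

theorem aux_root {A : Type*} [Ring A] [Algebra ℝ A] (t : A) (m : Polynomial ℝ)
    (h : Polynomial.aeval t m = 0)
    (p q : Polynomial ℝ) (e : p = q * m) : Polynomial.aeval t p = 0 := by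
  rw [e, map_mul, h, mul_zero]

/-- If `θ : V → V` is a linear map of a finite-dimensional real vector
space with `θ⁶ = id`, then each of
`f₁ = (1/√3)(θ - θ⁵)`, `f₂ = (1/(2√3))(θ - θ² + θ⁴ - θ⁵)`,
`f₃ = (1/(2√3))(θ + θ² - θ⁴ - θ⁵)`, `f₄ = (1/√3)(θ² - θ⁴)` satisfies `f³ + f = 0`;
moreover `P₃ = θ³` satisfies `P₃² = id`, and if `θ` has no nonzero fixed vector then
`P₂ = (1/3)θ + θ² + (1/3)θ³ + θ⁴ + (1/3)θ⁵` satisfies `P₂² = id`. -/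
theorem statement7 (V : Type*) [AddCommGroup V] [Module ℝ V] [FiniteDimensional ℝ V]
    (θ : V →ₗ[ℝ] V) (hθ : θ ^ 6 = 1) :
    ((1 / Real.sqrt 3) • (θ - θ ^ 5)) ^ 3 + (1 / Real.sqrt 3) • (θ - θ ^ 5) = 0 ∧
    ((1 / (2 * Real.sqrt 3)) • (θ - θ ^ 2 + θ ^ 4 - θ ^ 5)) ^ 3 +
      (1 / (2 * Real.sqrt 3)) • (θ - θ ^ 2 + θ ^ 4 - θ ^ 5) = 0 ∧
    ((1 / (2 * Real.sqrt 3)) • (θ + θ ^ 2 - θ ^ 4 - θ ^ 5)) ^ 3 +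
      (1 / (2 * Real.sqrt 3)) • (θ + θ ^ 2 - θ ^ 4 - θ ^ 5) = 0 ∧
    ((1 / Real.sqrt 3) • (θ ^ 2 - θ ^ 4)) ^ 3 + (1 / Real.sqrt 3) • (θ ^ 2 - θ ^ 4) = 0 ∧
    (θ ^ 3) ^ 2 = 1 ∧
    ((∀ v : V, θ v = v → v = 0) →
      ((1 / 3 : ℝ) • θ + θ ^ 2 + (1 / 3 : ℝ) • θ ^ 3 + θ ^ 4 + (1 / 3 : ℝ) • θ ^ 5) ^ 2 = 1) := by
  have s3 : Real.sqrt 3 ^ 2 = 3 := Real.sq_sqrt (by norm_num)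
  have s0 : Real.sqrt 3 ≠ 0 := by positivity
  have k1 : (1 / Real.sqrt 3) ^ 2 * 3 = 1 := by field_simp; linarith
  have k2 : (1 / (2 * Real.sqrt 3)) ^ 2 * 12 = 1 := by field_simp; linarith
  have hm : Polynomial.aeval θ (Polynomial.X ^ 6 - 1 : Polynomial ℝ) = 0 := by simp [hθ]
  refine ⟨aux_cube _ _ 3 k1 ?_, aux_cube _ _ 12 k2 ?_, aux_cube _ _ 12 k2 ?_,
    aux_cube _ _ 3 k1 ?_, by rw [← pow_mul, hθ], ?_⟩
  · have := aux_root θ _ hm ((Polynomial.X - Polynomial.X ^ 5) ^ 3 + (3 : ℝ) • (Polynomial.X - Polynomial.X ^ 5))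
      (Polynomial.C (-3) * Polynomial.X ^ 1 + Polynomial.C (-1) * Polynomial.X ^ 3 + Polynomial.C (3) * Polynomial.X ^ 5 + Polynomial.C (-1) * Polynomial.X ^ 9)
      (by simp only [Polynomial.smul_eq_C_mul, map_ofNat, map_neg, map_one]; ring)
    simpa only [map_add, map_sub, map_pow, map_smul, Polynomial.aeval_X] using this
  · have := aux_root θ _ hm ((Polynomial.X - Polynomial.X ^ 2 + Polynomial.X ^ 4 - Polynomial.X ^ 5) ^ 3 + (12 : ℝ) • (Polynomial.X - Polynomial.X ^ 2 + Polynomial.X ^ 4 - Polynomial.X ^ 5))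
      (Polynomial.C (-12) * Polynomial.X ^ 1 + Polynomial.C (12) * Polynomial.X ^ 2 + Polynomial.C (-1) * Polynomial.X ^ 3 + Polynomial.C (-9) * Polynomial.X ^ 4 + Polynomial.C (9) * Polynomial.X ^ 5 + Polynomial.C (-2) * Polynomial.X ^ 6 + Polynomial.C (-3) * Polynomial.X ^ 7 + Polynomial.C (3) * Polynomial.X ^ 8 + Polynomial.C (-1) * Polynomial.X ^ 9)
      (by simp only [Polynomial.smul_eq_C_mul, map_ofNat, map_neg, map_one]; ring)
    simpa only [map_add, map_sub, map_pow, map_smul, Polynomial.aeval_X] using this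
  · have := aux_root θ _ hm ((Polynomial.X + Polynomial.X ^ 2 - Polynomial.X ^ 4 - Polynomial.X ^ 5) ^ 3 + (12 : ℝ) • (Polynomial.X + Polynomial.X ^ 2 - Polynomial.X ^ 4 - Polynomial.X ^ 5))
      (Polynomial.C (-12) * Polynomial.X ^ 1 + Polynomial.C (-12) * Polynomial.X ^ 2 + Polynomial.C (-1) * Polynomial.X ^ 3 + Polynomial.C (9) * Polynomial.X ^ 4 + Polynomial.C (9) * Polynomial.X ^ 5 + Polynomial.C (2) * Polynomial.X ^ 6 + Polynomial.C (-3) * Polynomial.X ^ 7 + Polynomial.C (-3) * Polynomial.X ^ 8 + Polynomial.C (-1) * Polynomial.X ^ 9)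
      (by simp only [Polynomial.smul_eq_C_mul, map_ofNat, map_neg, map_one]; ring)
    simpa only [map_add, map_sub, map_pow, map_smul, Polynomial.aeval_X] using this
  · have := aux_root θ _ hm ((Polynomial.X ^ 2 - Polynomial.X ^ 4) ^ 3 + (3 : ℝ) • (Polynomial.X ^ 2 - Polynomial.X ^ 4))
      (Polynomial.C (-3) * Polynomial.X ^ 2 + Polynomial.C (3) * Polynomial.X ^ 4 + Polynomial.C (-1) * Polynomial.X ^ 6)
      (by simp only [Polynomial.smul_eq_C_mul, map_ofNat, map_neg, map_one]; ring)
    simpa only [map_add, map_sub, map_pow, map_smul, Polynomial.aeval_X] using this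
  intro hf
  have hs : 1 + θ + θ ^ 2 + θ ^ 3 + θ ^ 4 + θ ^ 5 = 0 := by
    ext v
    apply hf
    rw [← Module.End.mul_apply]
    congr 1
    simp only [mul_add, mul_one, ← pow_succ', ← pow_two]
    norm_num [hθ]
    abel
  have hm2 : Polynomial.aeval θ (1 + Polynomial.X + Polynomial.X ^ 2 + Polynomial.X ^ 3 +
      Polynomial.X ^ 4 + Polynomial.X ^ 5 : Polynomial ℝ) = 0 := by simpa using hs
  have := aux_root θ _ hm2 (((1 / 3 : ℝ) • Polynomial.X + Polynomial.X ^ 2 +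
      (1 / 3 : ℝ) • Polynomial.X ^ 3 + Polynomial.X ^ 4 + (1 / 3 : ℝ) • Polynomial.X ^ 5) ^ 2 - 1)
    (Polynomial.C (-1) * Polynomial.X ^ 0 + Polynomial.C (1) * Polynomial.X ^ 1 + Polynomial.C (1/9) * Polynomial.X ^ 2 + Polynomial.C (5/9) * Polynomial.X ^ 3 + Polynomial.C (5/9) * Polynomial.X ^ 4 + Polynomial.C (1/9) * Polynomial.X ^ 5)
    (by
      apply Polynomial.funext
      intro x
      simp only [Polynomial.eval_add, Polynomial.eval_sub, Polynomial.eval_mul, Polynomial.eval_pow,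
        Polynomial.eval_smul, Polynomial.eval_X, Polynomial.eval_C, Polynomial.eval_one, smul_eq_mul]
      ring)
  rw [← sub_eq_zero]
  simpa only [map_add, map_sub, map_pow, map_smul, map_one, Polynomial.aeval_X] using this
end

section
/- The map θ(X) = B₄ X B₄ᵀ maps 𝔪 into itself, and the canonical f-structure f₀ = (1/2)(θ − θ³) of the 4-symmetric space SO(n)/SO(2)×SO(n−3) acts on S ∈ 𝔪 as follows: (f₀S)₁₂ = S₁₃, (f₀S)₁₃ = −S₁₂, (f₀S)_{2j} = −S_{3j} and (f₀S)_{3j} = S_{2j} for all j ≥ 4, and (f₀S)_{1j} = 0 for all j ≥ 4 (all remaining entries determined by skew-symmetry). In particular f₀³ + f₀ = 0 on 𝔪. -/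
open Matrix

open FlagMfld


namespace FlagMfld

/-- swap of indices one and two -/
def sw {n : ℕ} (hn : 4 ≤ n) (i : Fin n) : Fin n :=
  if i.val = 1 then ⟨2, by omega⟩ else if i.val = 2 then ⟨1, by omega⟩ else i

/-- signs -/
def sg {n : ℕ} (i : Fin n) : ℝ := if i.val ≤ 1 then 1 else -1

lemma B4_eq {n : ℕ} (hn : 4 ≤ n) (i j : Fin n) :
    (B4 : Matrix (Fin n) (Fin n) ℝ) i j = if sw hn i = j then sg i else 0 := by
  simp only [B4, sw, sg, Matrix.of_apply, Fin.ext_iff]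
  grind

lemma th4_eq {n : ℕ} (hn : 4 ≤ n) (X : Matrix (Fin n) (Fin n) ℝ) (i j : Fin n) :
    th4 X i j = sg i * sg j * X (sw hn i) (sw hn j) := by
  simp only [th4, Matrix.mul_apply, Matrix.transpose_apply, B4_eq hn, ite_mul, mul_ite, zero_mul,
    mul_zero, Finset.sum_ite_eq, Finset.mem_univ, if_true]
  ring

lemma sw_sw {n : ℕ} (hn : 4 ≤ n) (i : Fin n) : sw hn (sw hn i) = i := by
  simp only [sw, Fin.ext_iff]
  grind

lemma f0_eq {n : ℕ} (hn : 4 ≤ n) (X : Matrix (Fin n) (Fin n) ℝ) (i j : Fin n) :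
    f0 X i j = (sg i * sg j * (1 - sg i * sg j * (sg (sw hn i) * sg (sw hn j))) / 2)
      * X (sw hn i) (sw hn j) := by
  simp only [f0, Matrix.smul_apply, Matrix.sub_apply, th4_eq hn, sw_sw, smul_eq_mul]
  ring

lemma sg_cases {n : ℕ} (i : Fin n) : sg i = 1 ∨ sg i = -1 := by
  unfold sg; split_ifs <;> simp

lemma sw1 {n : ℕ} (hn : 4 ≤ n) (i j : Fin n) (h : i.val = 1) (h' : j.val = 2) : sw hn i = j := by
  simp [sw, h, Fin.ext_iff, h']

lemma sw2 {n : ℕ} (hn : 4 ≤ n) (i j : Fin n) (h : i.val = 2) (h' : j.val = 1) : sw hn i = j := by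
  simp [sw, h, Fin.ext_iff, h']

lemma sw3 {n : ℕ} (hn : 4 ≤ n) (i : Fin n) (h : i.val = 0 ∨ 3 ≤ i.val) : sw hn i = i := by
  unfold sw; grind

lemma sgp {n : ℕ} (i : Fin n) (h : i.val ≤ 1) : sg i = 1 := by simp [sg, h]

lemma sgn {n : ℕ} (i : Fin n) (h : 2 ≤ i.val) : sg i = -1 := by
  unfold sg; rw [if_neg (by omega)]

end FlagMfld

/-- `θ(X) = B₄XB₄ᵀ` maps `𝔪` into itself, and the canonical f-structure
`f₀ = (1/2)(θ - θ³)` acts on `S ∈ 𝔪` by `(f₀S)₁₂ = S₁₃`, `(f₀S)₁₃ = -S₁₂`,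
`(f₀S)_{2j} = -S_{3j}`, `(f₀S)_{3j} = S_{2j}` and `(f₀S)_{1j} = 0` for `j ≥ 4` (1-based
indices; 0-based in the formalization). In particular `f₀³ + f₀ = 0` on `𝔪`. -/
theorem statement8 (n : ℕ) (hn : 4 ≤ n) :
    ∀ S : Matrix (Fin n) (Fin n) ℝ, inM S →
      inM (th4 S) ∧
      (∀ i j k : Fin n, i.val = 0 → j.val = 1 → k.val = 2 →
        f0 S i j = S i k ∧ f0 S i k = -S i j) ∧
      (∀ i i' j : Fin n, i.val = 1 → i'.val = 2 → 3 ≤ j.val →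
        f0 S i j = -S i' j ∧ f0 S i' j = S i j) ∧
      (∀ i j : Fin n, i.val = 0 → 3 ≤ j.val → f0 S i j = 0) ∧
      f0 (f0 (f0 S)) + f0 S = 0 := by
  intro S ⟨hS, h12, h3⟩
  have hsk : ∀ i j, S j i = - S i j := fun i j => by
    have := congrFun (congrFun hS i) j
    simpa using this
  refine ⟨⟨?_, ?_, ?_⟩, ?_, ?_, ?_, ?_⟩
  · ext i j
    simp only [Matrix.transpose_apply, Matrix.neg_apply, th4_eq hn]
    rw [hsk (sw hn i) (sw hn j)]; ring
  · intro i j hi hj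
    rw [th4_eq hn, sw1 hn i j hi hj, sw2 hn j i hj hi, hsk, h12 i j hi hj]; simp
  · intro i j hi hj
    rw [th4_eq hn, sw3 hn i (Or.inr hi), sw3 hn j (Or.inr hj), h3 i j hi hj]; simp
  · intro i j k hi hj hk
    rw [f0_eq hn, f0_eq hn, sw3 hn i (Or.inl hi), sw1 hn j k hj hk, sw2 hn k j hk hj,
      sgp i (by omega), sgp j (by omega), sgn k (by omega)]
    constructor <;> ring
  · intro i k j hi hk hj
    rw [f0_eq hn, f0_eq hn, sw3 hn j (Or.inr hj), sw1 hn i k hi hk, sw2 hn k i hk hi,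
      sgp i (by omega), sgn j (by omega), sgn k (by omega)]
    constructor <;> ring
  · intro i j hi hj
    rw [f0_eq hn, sw3 hn j (Or.inr hj), sw3 hn i (Or.inl hi),
      sgp i (by omega), sgn j (by omega)]
    ring
  · ext i j
    simp only [Matrix.add_apply, Matrix.zero_apply, f0_eq hn, sw_sw]
    rcases sg_cases i with a | a <;> rcases sg_cases j with b | b <;>
    rcases sg_cases (sw hn i) with c | c <;> rcases sg_cases (sw hn j) with d | d <;>
    rw [a, b, c, d] <;> ring
end

section
/- The map θ(X) = B₆ X B₆ᵀ maps 𝔪 into itself, and the four canonical f-structures of the 6-symmetric space SO(n)/SO(2)×SO(n−3) act on S ∈ 𝔪 as follows (all remaining entries determined by skew-symmetry, j ranging over j ≥ 4): f₁ = (1/√3)(θ − θ⁵) satisfies (f₁S)₁₂ = S₁₃, (f₁S)₁₃ = −S₁₂, (f₁S)_{2j} = −S_{3j}, (f₁S)_{3j} = S_{2j}, (f₁S)_{1j} = 0; f₂ = (1/(2√3))(θ − θ² + θ⁴ − θ⁵) satisfies (f₂S)_{2j} = −S_{3j}, (f₂S)_{3j} = S_{2j}, and all entries of f₂S in row 1 are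 zero; f₃ = (1/(2√3))(θ + θ² − θ⁴ − θ⁵) satisfies (f₃S)₁₂ = S₁₃, (f₃S)₁₃ = −S₁₂, and all other entries of f₃S are zero; f₄ = (1/√3)(θ² − θ⁴) satisfies (f₄S)₁₂ = S₁₃, (f₄S)₁₃ = −S₁₂, (f₄S)_{2j} = S_{3j}, (f₄S)_{3j} = −S_{2j}, (f₄S)_{1j} = 0. -/
open Matrix

section helpers
set_option linter.unusedSimpArgs false
open FlagMfld

theorem aux_row0 {n : ℕ} (X : Matrix (Fin n) (Fin n) ℝ) (a j : Fin n) (ha : a.val = 0) :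
    ((B6 : Matrix (Fin n) (Fin n) ℝ) * X) a j = X a j := by
  have h : ∀ k : Fin n, (B6 : Matrix (Fin n) (Fin n) ℝ) a k = if k = a then 1 else 0 := by
    intro k; simp only [B6, Matrix.of_apply, Fin.ext_iff, ha]; grind
  simp [Matrix.mul_apply, h]

theorem aux_row1 {n : ℕ} (X : Matrix (Fin n) (Fin n) ℝ) (b c j : Fin n)
    (hb : b.val = 1) (hc : c.val = 2) :
    ((B6 : Matrix (Fin n) (Fin n) ℝ) * X) b j = 1 / 2 * X b j + Real.sqrt 3 / 2 * X c j := by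
  have h : ∀ k : Fin n, (B6 : Matrix (Fin n) (Fin n) ℝ) b k =
      (if k = b then 1 / 2 else 0) + (if k = c then Real.sqrt 3 / 2 else 0) := by
    intro k; simp only [B6, Matrix.of_apply, Fin.ext_iff, hb, hc]; grind
  simp [Matrix.mul_apply, h, add_mul, Finset.sum_add_distrib]

theorem aux_row2 {n : ℕ} (X : Matrix (Fin n) (Fin n) ℝ) (b c j : Fin n)
    (hb : b.val = 1) (hc : c.val = 2) :
    ((B6 : Matrix (Fin n) (Fin n) ℝ) * X) c j = -(Real.sqrt 3 / 2) * X b j + 1 / 2 * X c j := by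
  have h : ∀ k : Fin n, (B6 : Matrix (Fin n) (Fin n) ℝ) c k =
      (if k = b then -(Real.sqrt 3 / 2) else 0) + (if k = c then 1 / 2 else 0) := by
    intro k; simp only [B6, Matrix.of_apply, Fin.ext_iff, hb, hc]; grind
  simp [Matrix.mul_apply, h, add_mul, Finset.sum_add_distrib]

theorem aux_row3 {n : ℕ} (X : Matrix (Fin n) (Fin n) ℝ) (i j : Fin n) (hi : 3 ≤ i.val) :
    ((B6 : Matrix (Fin n) (Fin n) ℝ) * X) i j = - X i j := by
  have h : ∀ k : Fin n, (B6 : Matrix (Fin n) (Fin n) ℝ) i k = if k = i then -1 else 0 := by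
    intro k; simp only [B6, Matrix.of_apply, Fin.ext_iff]; grind
  simp [Matrix.mul_apply, h]

theorem aux_th6 {n : ℕ} (X : Matrix (Fin n) (Fin n) ℝ) (i j : Fin n) :
    th6 X i j = ((B6 : Matrix (Fin n) (Fin n) ℝ) * ((B6 : Matrix (Fin n) (Fin n) ℝ) * X)ᵀ) j i := by
  have : th6 X = (B6 * (B6 * X)ᵀ)ᵀ := by simp [th6, Matrix.transpose_mul]
  rw [this, Matrix.transpose_apply]

theorem aux_inM {n : ℕ} (hn : 4 ≤ n) (S : Matrix (Fin n) (Fin n) ℝ) (hS : inM S) :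
    inM (th6 S) := by
  obtain ⟨h1, h2, h3⟩ := hS
  have sk : ∀ i j, S j i = - S i j := fun i j => by
    have := congrFun (congrFun h1 i) j
    simpa using this
  have sd : ∀ i, S i i = 0 := fun i => by linarith [sk i i]
  refine ⟨?_, ?_, ?_⟩
  · simp [th6, Matrix.transpose_mul, h1, Matrix.mul_assoc]
  · intro b c hb hc
    rw [aux_th6, aux_row2 _ b c _ hb hc]
    simp only [Matrix.transpose_apply]
    rw [aux_row1 _ b c _ hb hc, aux_row1 _ b c _ hb hc, sk b c, h2 b c hb hc, sd, sd]
    simp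
  · intro i j hi hj
    rw [aux_th6, aux_row3 _ _ _ hj, Matrix.transpose_apply, aux_row3 _ _ _ hi, h3 i j hi hj]
    simp

/-- All entries of `θX` relevant on `𝔪`. -/
theorem aux_01 {n : ℕ} (X : Matrix (Fin n) (Fin n) ℝ) (a b c : Fin n)
    (ha : a.val = 0) (hb : b.val = 1) (hc : c.val = 2) :
    th6 X a b = 1 / 2 * X a b + Real.sqrt 3 / 2 * X a c := by
  rw [aux_th6, aux_row1 _ b c _ hb hc]
  simp only [Matrix.transpose_apply, aux_row0 _ a _ ha]

theorem aux_02 {n : ℕ} (X : Matrix (Fin n) (Fin n) ℝ) (a b c : Fin n)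
    (ha : a.val = 0) (hb : b.val = 1) (hc : c.val = 2) :
    th6 X a c = -(Real.sqrt 3 / 2) * X a b + 1 / 2 * X a c := by
  rw [aux_th6, aux_row2 _ b c _ hb hc]
  simp only [Matrix.transpose_apply, aux_row0 _ a _ ha]

theorem aux_03 {n : ℕ} (X : Matrix (Fin n) (Fin n) ℝ) (a j : Fin n)
    (ha : a.val = 0) (hj : 3 ≤ j.val) : th6 X a j = - X a j := by
  rw [aux_th6, aux_row3 _ _ _ hj]
  simp only [Matrix.transpose_apply, aux_row0 _ a _ ha]

theorem aux_13 {n : ℕ} (X : Matrix (Fin n) (Fin n) ℝ) (b c j : Fin n)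
    (hb : b.val = 1) (hc : c.val = 2) (hj : 3 ≤ j.val) :
    th6 X b j = -(1 / 2 * X b j + Real.sqrt 3 / 2 * X c j) := by
  rw [aux_th6, aux_row3 _ _ _ hj]
  simp only [Matrix.transpose_apply, aux_row1 _ b c _ hb hc]

theorem aux_23 {n : ℕ} (X : Matrix (Fin n) (Fin n) ℝ) (b c j : Fin n)
    (hb : b.val = 1) (hc : c.val = 2) (hj : 3 ≤ j.val) :
    th6 X c j = -(-(Real.sqrt 3 / 2) * X b j + 1 / 2 * X c j) := by
  rw [aux_th6, aux_row3 _ _ _ hj]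
  simp only [Matrix.transpose_apply, aux_row2 _ b c _ hb hc]

theorem aux_skew {n : ℕ} {X : Matrix (Fin n) (Fin n) ℝ} (h : inM X) (i j : Fin n) :
    X j i = - X i j := by
  have := congrFun (congrFun h.1 i) j
  simpa using this

theorem aux_diag {n : ℕ} {X : Matrix (Fin n) (Fin n) ℝ} (h : inM X) (i : Fin n) :
    X i i = 0 := by linarith [aux_skew h i i]

theorem aux_f3_inM {n : ℕ} (hn : 4 ≤ n) {X : Matrix (Fin n) (Fin n) ℝ} (h : inM X) :
    inM (f3 X) := by
  have t1 := aux_inM hn _ h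
  have t2 := aux_inM hn _ t1
  have t3 := aux_inM hn _ t2
  have t4 := aux_inM hn _ t3
  have t5 := aux_inM hn _ t4
  refine ⟨?_, ?_, ?_⟩
  · rw [f3, Matrix.transpose_smul, Matrix.transpose_sub, Matrix.transpose_sub,
      Matrix.transpose_add, t1.1, t2.1, t4.1, t5.1, ← smul_neg]
    congr 1
    abel
  · intro i j hi hj
    simp [f3, t1.2.1 i j hi hj, t2.2.1 i j hi hj, t4.2.1 i j hi hj, t5.2.1 i j hi hj]
  · intro i j hi hj
    simp [f3, t1.2.2 i j hi hj, t2.2.2 i j hi hj, t4.2.2 i j hi hj, t5.2.2 i j hi hj]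

end helpers

open FlagMfld

/-- `θ(X) = B₆XB₆ᵀ` maps `𝔪` into itself, and the four canonical
f-structures of the 6-symmetric space act on `S ∈ 𝔪` as described (1-based indices in the
paper; 0-based in the formalization, `j` ranging over `j ≥ 4`, i.e. `j.val ≥ 3`). -/
theorem statement9 (n : ℕ) (hn : 4 ≤ n) :
    ∀ S : Matrix (Fin n) (Fin n) ℝ, inM S →
      inM (th6 S) ∧
      -- f₁ : (f₁S)₁₂ = S₁₃, (f₁S)₁₃ = -S₁₂, (f₁S)_{2j} = -S_{3j}, (f₁S)_{3j} = S_{2j},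
      -- (f₁S)_{1j} = 0
      ((∀ i j k : Fin n, i.val = 0 → j.val = 1 → k.val = 2 →
        f1 S i j = S i k ∧ f1 S i k = -S i j) ∧
       (∀ i i' j : Fin n, i.val = 1 → i'.val = 2 → 3 ≤ j.val →
        f1 S i j = -S i' j ∧ f1 S i' j = S i j) ∧
       (∀ i j : Fin n, i.val = 0 → 3 ≤ j.val → f1 S i j = 0)) ∧
      -- f₂ : (f₂S)_{2j} = -S_{3j}, (f₂S)_{3j} = S_{2j}, and row 1 of f₂S vanishes
      ((∀ i i' j : Fin n, i.val = 1 → i'.val = 2 → 3 ≤ j.val →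
        f2 S i j = -S i' j ∧ f2 S i' j = S i j) ∧
       (∀ i j : Fin n, i.val = 0 → f2 S i j = 0)) ∧
      -- f₃ : (f₃S)₁₂ = S₁₃, (f₃S)₁₃ = -S₁₂, and all other entries of f₃S vanish
      ((∀ i j k : Fin n, i.val = 0 → j.val = 1 → k.val = 2 →
        f3 S i j = S i k ∧ f3 S i k = -S i j) ∧
       (∀ i j : Fin n,
        ¬((i.val = 0 ∧ (j.val = 1 ∨ j.val = 2)) ∨ (j.val = 0 ∧ (i.val = 1 ∨ i.val = 2))) →
        f3 S i j = 0)) ∧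
      -- f₄ : (f₄S)₁₂ = S₁₃, (f₄S)₁₃ = -S₁₂, (f₄S)_{2j} = S_{3j}, (f₄S)_{3j} = -S_{2j},
      -- (f₄S)_{1j} = 0
      ((∀ i j k : Fin n, i.val = 0 → j.val = 1 → k.val = 2 →
        f4 S i j = S i k ∧ f4 S i k = -S i j) ∧
       (∀ i i' j : Fin n, i.val = 1 → i'.val = 2 → 3 ≤ j.val →
        f4 S i j = S i' j ∧ f4 S i' j = -S i j) ∧
       (∀ i j : Fin n, i.val = 0 → 3 ≤ j.val → f4 S i j = 0)) := by
  intro S hS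
  have hs : Real.sqrt 3 ^ 2 = 3 := Real.sq_sqrt (by norm_num)
  have hs0 : Real.sqrt 3 ≠ 0 := by positivity
  have t1 := aux_inM hn _ hS
  have t2 := aux_inM hn _ t1
  have t3 := aux_inM hn _ t2
  have t4 := aux_inM hn _ t3
  have t5 := aux_inM hn _ t4
  refine ⟨t1, ⟨?_, ?_, ?_⟩, ⟨?_, ?_⟩, ⟨?_, ?_⟩, ⟨?_, ?_, ?_⟩⟩
  · intro a b c ha hb hc
    constructor
    · simp only [f1, Matrix.smul_apply, Matrix.sub_apply, Matrix.add_apply, smul_eq_mul, aux_01 _ a b c ha hb hc, aux_02 _ a b c ha hb hc]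
      field_simp
      grind
    · simp only [f1, Matrix.smul_apply, Matrix.sub_apply, Matrix.add_apply, smul_eq_mul, aux_01 _ a b c ha hb hc, aux_02 _ a b c ha hb hc]
      field_simp
      grind
  · intro b c j hb hc hj
    constructor
    · simp only [f1, Matrix.smul_apply, Matrix.sub_apply, Matrix.add_apply, smul_eq_mul, aux_13 _ b c j hb hc hj, aux_23 _ b c j hb hc hj]
      field_simp
      grind
    · simp only [f1, Matrix.smul_apply, Matrix.sub_apply, Matrix.add_apply, smul_eq_mul, aux_13 _ b c j hb hc hj, aux_23 _ b c j hb hc hj]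
      field_simp
      grind
  · intro a j ha hj
    simp [f1, aux_03 _ a j ha hj]
  · intro b c j hb hc hj
    constructor
    · simp only [f2, Matrix.smul_apply, Matrix.sub_apply, Matrix.add_apply, smul_eq_mul, aux_13 _ b c j hb hc hj, aux_23 _ b c j hb hc hj]
      field_simp
      grind
    · simp only [f2, Matrix.smul_apply, Matrix.sub_apply, Matrix.add_apply, smul_eq_mul, aux_13 _ b c j hb hc hj, aux_23 _ b c j hb hc hj]
      field_simp
      grind
  · intro a j ha
    obtain ⟨b, hb⟩ : ∃ b : Fin n, b.val = 1 := ⟨⟨1, by omega⟩, rfl⟩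
    obtain ⟨c, hc⟩ : ∃ c : Fin n, c.val = 2 := ⟨⟨2, by omega⟩, rfl⟩
    have hj : j = a ∨ j = b ∨ j = c ∨ 3 ≤ j.val := by
      simp only [Fin.ext_iff]; omega
    rcases hj with rfl | rfl | rfl | hj
    · simp [f2, aux_diag t1, aux_diag t2, aux_diag t4, aux_diag t5]
    · simp only [f2, Matrix.smul_apply, Matrix.sub_apply, Matrix.add_apply, smul_eq_mul, aux_01 _ a j c ha hb hc, aux_02 _ a j c ha hb hc]
      field_simp
      grind
    · simp only [f2, Matrix.smul_apply, Matrix.sub_apply, Matrix.add_apply, smul_eq_mul, aux_01 _ a b j ha hb hc, aux_02 _ a b j ha hb hc]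
      field_simp
      grind
    · simp [f2, aux_03 _ a j ha hj]
  · intro a b c ha hb hc
    constructor
    · simp only [f3, Matrix.smul_apply, Matrix.sub_apply, Matrix.add_apply, smul_eq_mul, aux_01 _ a b c ha hb hc, aux_02 _ a b c ha hb hc]
      field_simp
      grind
    · simp only [f3, Matrix.smul_apply, Matrix.sub_apply, Matrix.add_apply, smul_eq_mul, aux_01 _ a b c ha hb hc, aux_02 _ a b c ha hb hc]
      field_simp
      grind
  · have g := aux_f3_inM hn hS
    have key : ∀ i j : Fin n, i.val ≤ j.val →
        ¬(i.val = 0 ∧ (j.val = 1 ∨ j.val = 2)) → f3 S i j = 0 := by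
      intro i j hij hne
      obtain ⟨b, hb⟩ : ∃ b : Fin n, b.val = 1 := ⟨⟨1, by omega⟩, rfl⟩
      obtain ⟨c, hc⟩ : ∃ c : Fin n, c.val = 2 := ⟨⟨2, by omega⟩, rfl⟩
      by_cases hd : i = j
      · rw [hd]; exact aux_diag g j
      have hd' : i.val ≠ j.val := fun h => hd (Fin.ext h)
      by_cases h12 : i.val = 1 ∧ j.val = 2
      · exact g.2.1 i j h12.1 h12.2
      have hj : 3 ≤ j.val := by omega
      have hi : i.val = 0 ∨ i = b ∨ i = c ∨ 3 ≤ i.val := by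
        simp only [Fin.ext_iff]; omega
      rcases hi with hi | rfl | rfl | hi
      · simp [f3, aux_03 _ i j hi hj]
      · simp only [f3, Matrix.smul_apply, Matrix.sub_apply, Matrix.add_apply, smul_eq_mul, aux_13 _ i c j hb hc hj, aux_23 _ i c j hb hc hj]
        field_simp
        grind
      · simp only [f3, Matrix.smul_apply, Matrix.sub_apply, Matrix.add_apply, smul_eq_mul, aux_13 _ b i j hb hc hj, aux_23 _ b i j hb hc hj]
        field_simp
        grind
      · exact g.2.2 i j hi hj
    intro i j hne
    rcases le_total i.val j.val with h | h
    · exact key i j h (by tauto)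
    · rw [aux_skew g j i, key j i h (by tauto), neg_zero]
  · intro a b c ha hb hc
    constructor
    · simp only [f4, Matrix.smul_apply, Matrix.sub_apply, Matrix.add_apply, smul_eq_mul, aux_01 _ a b c ha hb hc, aux_02 _ a b c ha hb hc]
      field_simp
      grind
    · simp only [f4, Matrix.smul_apply, Matrix.sub_apply, Matrix.add_apply, smul_eq_mul, aux_01 _ a b c ha hb hc, aux_02 _ a b c ha hb hc]
      field_simp
      grind
  · intro b c j hb hc hj
    constructor
    · simp only [f4, Matrix.smul_apply, Matrix.sub_apply, Matrix.add_apply, smul_eq_mul, aux_13 _ b c j hb hc hj, aux_23 _ b c j hb hc hj]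
      field_simp
      grind
    · simp only [f4, Matrix.smul_apply, Matrix.sub_apply, Matrix.add_apply, smul_eq_mul, aux_13 _ b c j hb hc hj, aux_23 _ b c j hb hc hj]
      field_simp
      grind
  · intro a j ha hj
    simp [f4, aux_03 _ a j ha hj]
end

section
/- The maps θ(X) = B₄ X B₄ᵀ and θ'(X) = B₆ X B₆ᵀ both map 𝔪 into itself; θ satisfies θ⁴ = id on 𝔪 and has no nonzero fixed vector in 𝔪, and θ' satisfies θ'⁶ = id on 𝔪 and has no nonzero fixed vector in 𝔪 (this expresses the regularity of SO(n)/SO(2)×SO(n−3) as a homogeneous Φ-space of order 4, respectively 6). -/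
open Matrix

open FlagMfld


section aux
variable {m : ℕ}

/-- Explicit description of left multiplication by `B`. -/
def BRow (c s : ℝ) (B : Matrix (Fin (m+3)) (Fin (m+3)) ℝ) : Prop :=
  ∀ (Y : Matrix (Fin (m+3)) (Fin (m+3)) ℝ) (j : Fin (m+3)),
    (B * Y) 0 j = Y 0 j ∧ (B * Y) 1 j = c * Y 1 j + s * Y 2 j ∧
    (B * Y) 2 j = -s * Y 1 j + c * Y 2 j ∧
    ∀ k : Fin m, (B * Y) k.succ.succ.succ j = - Y k.succ.succ.succ j

theorem allFin {P : Fin (m+3) → Prop} (h0 : P 0) (h1 : P 1) (h2 : P 2)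
    (h3 : ∀ k : Fin m, P k.succ.succ.succ) : ∀ i, P i := by
  intro i
  refine Fin.cases h0 (fun i => ?_) i
  refine Fin.cases h1 (fun i => ?_) i
  refine Fin.cases h2 (fun i => ?_) i
  exact h3 i

theorem v2 : 2 % (m + 3) = 2 := Nat.mod_eq_of_lt (by omega)

theorem t20 : ¬ (2 : Fin (m+3)) = 0 := by
  intro h
  have := congrArg Fin.val h
  simp [v2] at this

theorem row4 : BRow 0 1 (B4 : Matrix (Fin (m+3)) (Fin (m+3)) ℝ) := by
  intro Y j
  refine ⟨?_, ?_, ?_, fun k => ?_⟩ <;>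
    simp [Matrix.mul_apply, Fin.sum_univ_succ, B4, v2, t20]

theorem row6 : BRow (1/2) (√3/2) (B6 : Matrix (Fin (m+3)) (Fin (m+3)) ℝ) := by
  intro Y j
  refine ⟨?_, ?_, ?_, fun k => ?_⟩ <;>
    simp [Matrix.mul_apply, Fin.sum_univ_succ, B6, v2, t20]

theorem conj_eq (B X : Matrix (Fin (m+3)) (Fin (m+3)) ℝ) (i j) :
    (B * X * Bᵀ) i j = (B * (B * X)ᵀ) j i := by
  rw [← Matrix.transpose_apply (B * (B * X)ᵀ), Matrix.transpose_mul, Matrix.transpose_transpose]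

theorem inM_conj {c s : ℝ} {B : Matrix (Fin (m+3)) (Fin (m+3)) ℝ} (hB : BRow c s B)
    (hcs : c^2 + s^2 = 1) {X} (hX : inM X) : inM (B * X * Bᵀ) := by
  obtain ⟨hs, h1, h2⟩ := hX
  have sk : ∀ i j, X j i = - X i j := fun i j => congrFun (congrFun hs i) j
  have h12 : X 1 2 = 0 := h1 1 2 (by simp) (by simp [v2])
  have d : ∀ i, X i i = 0 := fun i => by linarith [sk i i]
  refine ⟨?_, ?_, ?_⟩
  · simp [Matrix.transpose_mul, hs, Matrix.mul_assoc]
  · intro i j hi hj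
    obtain rfl : i = 1 := Fin.ext (by simpa using hi)
    obtain rfl : j = 2 := Fin.ext (by simpa [v2] using hj)
    rw [conj_eq, (hB _ _).2.2.1, transpose_apply, transpose_apply, (hB _ _).2.1, (hB _ _).2.1,
      sk 1 2, h12, d, d]
    ring
  · intro i j
    induction i using allFin <;> induction j using allFin <;> intro hi hj <;>
      simp [v2] at hi hj
    rename_i k l
    rw [conj_eq, (hB _ _).2.2.2, transpose_apply, (hB _ _).2.2.2, h2 _ _ (by simp) (by simp)]
    simp

theorem fix_conj {c s : ℝ} {B : Matrix (Fin (m+3)) (Fin (m+3)) ℝ} (hB : BRow c s B)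
    (hcs : c^2 + s^2 = 1) (hc0 : 0 ≤ c) (hc : c < 1) {X} (hX : inM X)
    (hf : B * X * Bᵀ = X) : X = 0 := by
  obtain ⟨hs, h1, h2⟩ := hX
  have sk : ∀ i j, X j i = - X i j := fun i j => congrFun (congrFun hs i) j
  have h12 : X 1 2 = 0 := h1 1 2 (by simp) (by simp [v2])
  have d : ∀ i, X i i = 0 := fun i => by linarith [sk i i]
  have F : ∀ i j, X i j = (B * (B * X)ᵀ) j i := fun i j => by rw [← conj_eq, hf]
  have key : ∀ a b : ℝ, a = c * a + s * b → b = -s * a + c * b → a = 0 ∧ b = 0 := by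
    intro a b ha hb
    have e : (1 - c) * (a^2+b^2) = 0 := by linear_combination a * ha + b * hb
    have e2 : a^2 + b^2 = 0 := by
      rcases mul_eq_zero.1 e with h | h
      · linarith
      · exact h
    constructor <;> nlinarith [sq_nonneg a, sq_nonneg b]
  have key' : ∀ a b : ℝ, a = -(c * a + s * b) → b = -(-s * a + c * b) → a = 0 ∧ b = 0 := by
    intro a b ha hb
    have e : (1 + c) * (a^2+b^2) = 0 := by linear_combination a * ha + b * hb
    have e2 : a^2 + b^2 = 0 := by
      rcases mul_eq_zero.1 e with h | h
      · linarith
      · exact h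
    constructor <;> nlinarith [sq_nonneg a, sq_nonneg b]
  have A := key (X 1 0) (X 2 0)
    (by have := F 1 0; rwa [(hB _ _).1, transpose_apply, (hB _ _).2.1] at this)
    (by have := F 2 0; rwa [(hB _ _).1, transpose_apply, (hB _ _).2.2.1] at this)
  have C : ∀ k : Fin m, _ := fun k => key' (X 1 k.succ.succ.succ) (X 2 k.succ.succ.succ)
    (by have := F 1 k.succ.succ.succ
        rwa [(hB _ _).2.2.2, transpose_apply, (hB _ _).2.1] at this)
    (by have := F 2 k.succ.succ.succ
        rwa [(hB _ _).2.2.2, transpose_apply, (hB _ _).2.2.1] at this)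
  have E : ∀ k : Fin m, X 0 k.succ.succ.succ = 0 := fun k => by
    have := F 0 k.succ.succ.succ
    rw [(hB _ _).2.2.2, transpose_apply, (hB _ _).1] at this
    linarith
  ext i j
  rw [Matrix.zero_apply]
  induction i using allFin <;> induction j using allFin
  · exact d _
  · rw [sk, A.1, neg_zero]
  · rw [sk, A.2, neg_zero]
  · exact E _
  · exact A.1
  · exact d _
  · exact h12
  · exact (C _).1
  · exact A.2
  · rw [sk, h12, neg_zero]
  · exact d _
  · exact (C _).2
  · rw [sk, E, neg_zero]
  · rw [sk, (C _).1, neg_zero]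
  · rw [sk, (C _).2, neg_zero]
  · exact h2 _ _ (by simp) (by simp)

theorem pow4 : (B4 : Matrix (Fin (m+3)) (Fin (m+3)) ℝ)^4 = 1 := by
  have h : ∀ Y : Matrix (Fin (m+3)) (Fin (m+3)) ℝ, B4 * (B4 * (B4 * (B4 * Y))) = Y := by
    intro Y
    ext i j
    induction i using allFin
    · simp only [(row4 _ _).1]
    · simp only [(row4 _ _).2.1, (row4 _ _).2.2.1]; ring
    · simp only [(row4 _ _).2.1, (row4 _ _).2.2.1]; ring
    · simp only [(row4 _ _).2.2.2]; ring
  have := h 1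
  simpa [pow_succ, Matrix.mul_assoc] using this

theorem pow6 : (B6 : Matrix (Fin (m+3)) (Fin (m+3)) ℝ)^6 = 1 := by
  have q : (√3)^2 = 3 := Real.sq_sqrt (by norm_num)
  have h : ∀ Y : Matrix (Fin (m+3)) (Fin (m+3)) ℝ, ∀ j,
    ((B6 : Matrix (Fin (m+3)) (Fin (m+3)) ℝ) * ((B6 : Matrix (Fin (m+3)) (Fin (m+3)) ℝ) * ((B6 : Matrix (Fin (m+3)) (Fin (m+3)) ℝ) * Y))) 0 j = Y 0 j ∧ ((B6 : Matrix (Fin (m+3)) (Fin (m+3)) ℝ) * ((B6 : Matrix (Fin (m+3)) (Fin (m+3)) ℝ) * ((B6 : Matrix (Fin (m+3)) (Fin (m+3)) ℝ) * Y))) 1 j = - Y 1 j ∧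
    ((B6 : Matrix (Fin (m+3)) (Fin (m+3)) ℝ) * ((B6 : Matrix (Fin (m+3)) (Fin (m+3)) ℝ) * ((B6 : Matrix (Fin (m+3)) (Fin (m+3)) ℝ) * Y))) 2 j = - Y 2 j ∧
    ∀ k : Fin m, ((B6 : Matrix (Fin (m+3)) (Fin (m+3)) ℝ) * ((B6 : Matrix (Fin (m+3)) (Fin (m+3)) ℝ) * ((B6 : Matrix (Fin (m+3)) (Fin (m+3)) ℝ) * Y))) k.succ.succ.succ j = - Y k.succ.succ.succ j := by
    intro Y j
    refine ⟨?_, ?_, ?_, fun k => ?_⟩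
    · simp only [(row6 _ _).1]
    · simp only [(row6 _ _).2.1, (row6 _ _).2.2.1]
      linear_combination (-(3/8) * Y 1 j - √3/8 * Y 2 j) * q
    · simp only [(row6 _ _).2.1, (row6 _ _).2.2.1]
      linear_combination (√3/8 * Y 1 j - (3/8) * Y 2 j) * q
    · simp only [(row6 _ _).2.2.2]; ring
  have h' : ∀ Y : Matrix (Fin (m+3)) (Fin (m+3)) ℝ,
      B6 * (B6 * (B6 * (B6 * (B6 * (B6 * Y))))) = Y := by
    intro Y
    ext i j
    induction i using allFin
    · simp only [(h _ _).1]
    · simp only [(h _ _).2.1, neg_neg]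
    · simp only [(h _ _).2.2.1, neg_neg]
    · simp only [(h _ _).2.2.2, neg_neg]
  have := h' 1
  simpa [pow_succ, Matrix.mul_assoc] using this

end aux

/-- `θ(X) = B₄XB₄ᵀ` and `θ'(X) = B₆XB₆ᵀ` map `𝔪` into itself; `θ⁴ = id`
on `𝔪` with no nonzero fixed vector, and `θ'⁶ = id` on `𝔪` with no nonzero fixed vector
(regularity of the homogeneous Φ-space of order 4, resp. 6). -/
theorem statement10 (n : ℕ) (hn : 4 ≤ n) :
    (∀ X : Matrix (Fin n) (Fin n) ℝ, inM X → inM (th4 X)) ∧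
    (∀ X : Matrix (Fin n) (Fin n) ℝ, inM X → th4 (th4 (th4 (th4 X))) = X) ∧
    (∀ X : Matrix (Fin n) (Fin n) ℝ, inM X → th4 X = X → X = 0) ∧
    (∀ X : Matrix (Fin n) (Fin n) ℝ, inM X → inM (th6 X)) ∧
    (∀ X : Matrix (Fin n) (Fin n) ℝ, inM X → th6 (th6 (th6 (th6 (th6 (th6 X))))) = X) ∧
    (∀ X : Matrix (Fin n) (Fin n) ℝ, inM X → th6 X = X → X = 0) := by

  obtain ⟨m, rfl⟩ : ∃ m, n = m + 3 := ⟨n - 3, by omega⟩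
  have q : (√3)^2 = 3 := Real.sq_sqrt (by norm_num)
  have q6 : (1/2 : ℝ)^2 + (√3/2)^2 = 1 := by linear_combination q/4
  refine ⟨fun X hX => inM_conj row4 (by norm_num) hX, fun X _ => ?_,
    fun X hX h => fix_conj row4 (by norm_num) (by norm_num) (by norm_num) hX h,
    fun X hX => inM_conj row6 q6 hX, fun X _ => ?_,
    fun X hX h => fix_conj row6 q6 (by norm_num) (by norm_num) hX h⟩
  · have e : th4 (th4 (th4 (th4 X))) = B4^4 * X * (B4^4)ᵀ := by
      simp [th4, pow_succ, Matrix.mul_assoc, Matrix.transpose_mul]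
    rw [e, pow4]; simp
  · have e : th6 (th6 (th6 (th6 (th6 (th6 X))))) = B6^6 * X * (B6^6)ᵀ := by
      simp [th6, pow_succ, Matrix.mul_assoc, Matrix.transpose_mul]
    rw [e, pow6]; simp
end

section
/- For every s, t > 0 and all X, Y ∈ 𝔪, each of the canonical f-structures f₀ (order-4 case) and f₁, f₂, f₃, f₄ (order-6 case) is skew-symmetric with respect to g_{s,t}: g_{s,t}(f X, Y) + g_{s,t}(X, f Y) = 0. That is, the canonical f-structures on the 4- and 6-symmetric space SO(n)/SO(2)×SO(n−3) are metric f-structures with respect to every invariant Riemannian metric. -/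
open Matrix

open FlagMfld


namespace FlagMfld

/-- Indicator diagonal projections. -/
noncomputable def PP {n : ℕ} (p : ℕ → Prop) [DecidablePred p] : Matrix (Fin n) (Fin n) ℝ :=
  Matrix.diagonal fun i => if p i.val then 1 else 0

noncomputable def Pa {n : ℕ} : Matrix (Fin n) (Fin n) ℝ := PP (fun k => k = 0)
noncomputable def Pb {n : ℕ} : Matrix (Fin n) (Fin n) ℝ := PP (fun k => k = 1 ∨ k = 2)
noncomputable def Pc {n : ℕ} : Matrix (Fin n) (Fin n) ℝ := PP (fun k => 3 ≤ k)

theorem p1_eq {n : ℕ} (X : Matrix (Fin n) (Fin n) ℝ) : p1 X = Pa * X * Pb + Pb * X * Pa := by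
  ext i j
  simp only [p1, Pa, Pb, PP, Matrix.add_apply, Matrix.mul_diagonal, Matrix.diagonal_mul,
    Matrix.of_apply]
  split_ifs <;> first | (exfalso; omega) | simp

theorem p2_eq {n : ℕ} (X : Matrix (Fin n) (Fin n) ℝ) : p2 X = Pb * X * Pc + Pc * X * Pb := by
  ext i j
  simp only [p2, Pc, Pb, PP, Matrix.add_apply, Matrix.mul_diagonal, Matrix.diagonal_mul,
    Matrix.of_apply]
  split_ifs <;> first | (exfalso; omega) | simp

theorem p3_eq {n : ℕ} (X : Matrix (Fin n) (Fin n) ℝ) : p3 X = Pa * X * Pc + Pc * X * Pa := by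
  ext i j
  simp only [p3, Pc, Pa, PP, Matrix.add_apply, Matrix.mul_diagonal, Matrix.diagonal_mul,
    Matrix.of_apply]
  split_ifs <;> first | (exfalso; omega) | simp

theorem PP_T {n : ℕ} (p : ℕ → Prop) [DecidablePred p] :
    (PP p : Matrix (Fin n) (Fin n) ℝ)ᵀ = PP p := by
  simp [PP]

/-- Block-diagonal orthogonal matrices. -/
structure Good {n : ℕ} (B : Matrix (Fin n) (Fin n) ℝ) : Prop where
  orth : Bᵀ * B = 1
  ca : Pa * B = B * Pa
  cb : Pb * B = B * Pb
  cc : Pc * B = B * Pc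

theorem comm_T {n : ℕ} {B P : Matrix (Fin n) (Fin n) ℝ} (hP : Pᵀ = P) (h : P * B = B * P) :
    Bᵀ * P = P * Bᵀ := by
  have := congrArg Matrix.transpose h
  rwa [Matrix.transpose_mul, Matrix.transpose_mul, hP] at this

theorem sandwich {n : ℕ} {B P Q : Matrix (Fin n) (Fin n) ℝ} (X : Matrix (Fin n) (Fin n) ℝ)
    (hQ : Qᵀ = Q) (h : P * B = B * P) (h' : Q * B = B * Q) :
    P * (B * X * Bᵀ) * Q = B * (P * X * Q) * Bᵀ := by
  have e := comm_T hQ h'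
  calc P * (B * X * Bᵀ) * Q = (P * B) * X * (Bᵀ * Q) := by simp only [Matrix.mul_assoc]
    _ = _ := by rw [h, e]; simp only [Matrix.mul_assoc]

theorem g0_inv {n : ℕ} {B : Matrix (Fin n) (Fin n) ℝ} (h : Bᵀ * B = 1)
    (X Y : Matrix (Fin n) (Fin n) ℝ) : g0 (B * X * Bᵀ) (B * Y * Bᵀ) = g0 X Y := by
  unfold g0
  congr 1
  have : (B * X * Bᵀ)ᵀ * (B * Y * Bᵀ) = B * (Xᵀ * Y * Bᵀ) := by
    calc _ = B * Xᵀ * (Bᵀ * B) * Y * Bᵀ := by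
          simp only [Matrix.transpose_mul, Matrix.transpose_transpose, Matrix.mul_assoc]
      _ = _ := by rw [h]; simp only [Matrix.mul_assoc, Matrix.one_mul]
  rw [this, Matrix.trace_mul_comm, Matrix.mul_assoc, h, Matrix.mul_one]

theorem gst_inv {n : ℕ} {B : Matrix (Fin n) (Fin n) ℝ} (h : Good B) (s t : ℝ)
    (X Y : Matrix (Fin n) (Fin n) ℝ) : gst s t (B * X * Bᵀ) (B * Y * Bᵀ) = gst s t X Y := by
  have ha : (Pa : Matrix (Fin n) (Fin n) ℝ)ᵀ = Pa := PP_T _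
  have hb : (Pb : Matrix (Fin n) (Fin n) ℝ)ᵀ = Pb := PP_T _
  have hc : (Pc : Matrix (Fin n) (Fin n) ℝ)ᵀ = Pc := PP_T _
  have e1 : ∀ Z, p1 (B * Z * Bᵀ) = B * p1 Z * Bᵀ := fun Z => by
    rw [p1_eq, p1_eq, sandwich Z hb h.ca h.cb, sandwich Z ha h.cb h.ca, Matrix.mul_add,
      Matrix.add_mul]
  have e2 : ∀ Z, p2 (B * Z * Bᵀ) = B * p2 Z * Bᵀ := fun Z => by
    rw [p2_eq, p2_eq, sandwich Z hc h.cb h.cc, sandwich Z hb h.cc h.cb, Matrix.mul_add,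
      Matrix.add_mul]
  have e3 : ∀ Z, p3 (B * Z * Bᵀ) = B * p3 Z * Bᵀ := fun Z => by
    rw [p3_eq, p3_eq, sandwich Z hc h.ca h.cc, sandwich Z ha h.cc h.ca, Matrix.mul_add,
      Matrix.add_mul]
  simp only [gst, e1, e2, e3, g0_inv h.orth]

theorem gst_symm {n : ℕ} (s t : ℝ) (X Y : Matrix (Fin n) (Fin n) ℝ) :
    gst s t X Y = gst s t Y X := by
  have : ∀ U V : Matrix (Fin n) (Fin n) ℝ, g0 U V = g0 V U := fun U V => by
    unfold g0
    rw [← Matrix.trace_transpose, Matrix.transpose_mul, Matrix.transpose_transpose]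
  simp only [gst]
  rw [this (p1 X), this (p2 X), this (p3 X)]

theorem gst_add {n : ℕ} (s t : ℝ) (X Y Z : Matrix (Fin n) (Fin n) ℝ) :
    gst s t (X + Y) Z = gst s t X Z + gst s t Y Z := by
  simp only [gst, p1_eq, p2_eq, p3_eq, g0, Matrix.transpose_add, Matrix.mul_add, Matrix.add_mul,
    Matrix.trace_add]
  ring

theorem gst_smul {n : ℕ} (s t c : ℝ) (X Z : Matrix (Fin n) (Fin n) ℝ) :
    gst s t (c • X) Z = c * gst s t X Z := by
  simp only [gst, p1_eq, p2_eq, p3_eq, g0, Matrix.mul_smul, Matrix.smul_mul, ← smul_add,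
    Matrix.transpose_smul, Matrix.trace_smul, smul_eq_mul]
  ring

theorem gst_sub {n : ℕ} (s t : ℝ) (X Y Z : Matrix (Fin n) (Fin n) ℝ) :
    gst s t (X - Y) Z = gst s t X Z - gst s t Y Z := by
  have : X - Y = X + (-1 : ℝ) • Y := by simp [sub_eq_add_neg]
  rw [this, gst_add, gst_smul]; ring

theorem gst_add' {n : ℕ} (s t : ℝ) (X Y Z : Matrix (Fin n) (Fin n) ℝ) :
    gst s t Z (X + Y) = gst s t Z X + gst s t Z Y := by
  rw [gst_symm, gst_add, gst_symm s t X, gst_symm s t Y]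

theorem gst_sub' {n : ℕ} (s t : ℝ) (X Y Z : Matrix (Fin n) (Fin n) ℝ) :
    gst s t Z (X - Y) = gst s t Z X - gst s t Z Y := by
  rw [gst_symm, gst_sub, gst_symm s t X, gst_symm s t Y]

theorem gst_smul' {n : ℕ} (s t c : ℝ) (X Z : Matrix (Fin n) (Fin n) ℝ) :
    gst s t Z (c • X) = c * gst s t Z X := by
  rw [gst_symm, gst_smul, gst_symm s t X]

theorem ext3 {m : ℕ} {A B : Matrix (Fin (m + 3)) (Fin (m + 3)) ℝ}
    (h : ∀ i j, A i j = B i j) : A = B := by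
  ext i j; exact h i j

theorem fin3_cases {m : ℕ} {p : Fin (m + 3) → Prop} (h0 : p 0) (h1 : p (Fin.succ 0))
    (h2 : p (Fin.succ (Fin.succ 0))) (h3 : ∀ k : Fin m, p k.succ.succ.succ) : ∀ i, p i := by
  intro i
  induction i using Fin.cases with
  | zero => exact h0
  | succ i =>
    induction i using Fin.cases with
    | zero => exact h1
    | succ i =>
      induction i using Fin.cases with
      | zero => exact h2
      | succ i => exact h3 i

theorem sq3 : Real.sqrt 3 * Real.sqrt 3 = 3 := Real.mul_self_sqrt (by norm_num)

/-- Block-diagonal matrices. -/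
noncomputable def BM {m : ℕ} (x a b c d e : ℝ) : Matrix (Fin (m+3)) (Fin (m+3)) ℝ :=
  Matrix.of fun i => Fin.cases (fun j => Fin.cases x (fun _ => 0) j)
    (fun i' => Fin.cases
      (fun j => Fin.cases 0 (fun j' => Fin.cases a (fun j'' => Fin.cases b (fun _ => 0) j'') j') j)
      (fun i'' => Fin.cases
        (fun j => Fin.cases 0
          (fun j' => Fin.cases c (fun j'' => Fin.cases d (fun _ => 0) j'') j') j)
        (fun k => fun j => Fin.cases 0 (fun j' => Fin.cases 0 (fun j'' => Fin.cases 0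
          (fun l => if k = l then e else 0) j'') j') j) i'') i') i

theorem BM_mul {m : ℕ} (x a b c d e x' a' b' c' d' e' : ℝ) :
    (BM x a b c d e : Matrix (Fin (m+3)) (Fin (m+3)) ℝ) * BM x' a' b' c' d' e' =
      BM (x * x') (a * a' + b * c') (a * b' + b * d') (c * a' + d * c') (c * b' + d * d')
        (e * e') := by
  ext i j
  rw [Matrix.mul_apply]
  simp only [Fin.sum_univ_succ]
  revert i j
  refine fin3_cases ?_ ?_ ?_ (fun k => ?_)
  all_goals refine fin3_cases ?_ ?_ ?_ (fun l => ?_)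
  all_goals simp only [BM, Matrix.of_apply, Fin.cases_zero, Fin.cases_succ]
  all_goals simp

theorem BM_T {m : ℕ} (x a b c d e : ℝ) :
    (BM x a b c d e : Matrix (Fin (m+3)) (Fin (m+3)) ℝ)ᵀ = BM x a c b d e := by
  ext i j
  revert i j
  refine fin3_cases ?_ ?_ ?_ (fun k => ?_)
  all_goals refine fin3_cases ?_ ?_ ?_ (fun l => ?_)
  all_goals simp only [BM, Matrix.transpose_apply, Matrix.of_apply, Fin.cases_zero,
    Fin.cases_succ]
  simp only [eq_comm]

theorem BM_one {m : ℕ} : (BM 1 1 0 0 1 1 : Matrix (Fin (m+3)) (Fin (m+3)) ℝ) = 1 := by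
  ext i j
  revert i j
  refine fin3_cases ?_ ?_ ?_ (fun k => ?_)
  all_goals refine fin3_cases ?_ ?_ ?_ (fun l => ?_)
  all_goals simp only [BM, Matrix.one_apply, Matrix.of_apply, Fin.cases_zero,
    Fin.cases_succ, Fin.succ_inj]
  all_goals first | rfl | simp [Fin.succ_ne_zero, Fin.ext_iff]

theorem B4_BM {m : ℕ} : (B4 : Matrix (Fin (m+3)) (Fin (m+3)) ℝ) = BM 1 0 1 (-1) 0 (-1) := by
  ext i j
  revert i j
  refine fin3_cases ?_ ?_ ?_ (fun k => ?_)
  all_goals refine fin3_cases ?_ ?_ ?_ (fun l => ?_)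
  all_goals simp only [BM, B4, Matrix.of_apply, Fin.cases_zero, Fin.cases_succ, Fin.succ_inj,
    Fin.val_succ, Fin.val_zero]
  all_goals simp

theorem B6_BM {m : ℕ} : (B6 : Matrix (Fin (m+3)) (Fin (m+3)) ℝ) =
    BM 1 (1/2) (Real.sqrt 3 / 2) (-(Real.sqrt 3 / 2)) (1/2) (-1) := by
  ext i j
  revert i j
  refine fin3_cases ?_ ?_ ?_ (fun k => ?_)
  all_goals refine fin3_cases ?_ ?_ ?_ (fun l => ?_)
  all_goals simp only [BM, B6, Matrix.of_apply, Fin.cases_zero, Fin.cases_succ, Fin.succ_inj,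
    Fin.val_succ, Fin.val_zero]
  all_goals simp

theorem B4_orth {m : ℕ} : (B4 : Matrix (Fin (m+3)) (Fin (m+3)) ℝ)ᵀ * B4 = 1 := by
  rw [B4_BM, BM_T, BM_mul, ← BM_one]
  congr 1 <;> norm_num

theorem B6_orth {m : ℕ} : (B6 : Matrix (Fin (m+3)) (Fin (m+3)) ℝ)ᵀ * B6 = 1 := by
  rw [B6_BM, BM_T, BM_mul, ← BM_one]
  congr 1 <;> linarith [sq3]

theorem B4_comm {n : ℕ} (p : ℕ → Prop) [DecidablePred p] (h : p 1 ↔ p 2) :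
    (PP p : Matrix (Fin n) (Fin n) ℝ) * B4 = B4 * PP p := by
  ext i j
  simp only [PP, Matrix.mul_diagonal, Matrix.diagonal_mul]
  have : (B4 : Matrix (Fin n) (Fin n) ℝ) i j ≠ 0 → (p i.val ↔ p j.val) := by
    simp only [B4, Matrix.of_apply]
    split_ifs <;> simp_all
  by_cases h0 : (B4 : Matrix (Fin n) (Fin n) ℝ) i j = 0
  · simp [h0]
  · simp [this h0]

theorem B6_comm {n : ℕ} (p : ℕ → Prop) [DecidablePred p] (h : p 1 ↔ p 2) :
    (PP p : Matrix (Fin n) (Fin n) ℝ) * B6 = B6 * PP p := by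
  ext i j
  simp only [PP, Matrix.mul_diagonal, Matrix.diagonal_mul]
  have : (B6 : Matrix (Fin n) (Fin n) ℝ) i j ≠ 0 → (p i.val ↔ p j.val) := by
    simp only [B6, Matrix.of_apply]
    split_ifs <;> simp_all
  by_cases h0 : (B6 : Matrix (Fin n) (Fin n) ℝ) i j = 0
  · simp [h0]
  · simp [this h0]

theorem B4_good {m : ℕ} : Good (B4 : Matrix (Fin (m+3)) (Fin (m+3)) ℝ) :=
  ⟨B4_orth, B4_comm _ (by simp), B4_comm _ (by simp), B4_comm _ (by simp)⟩

theorem B6_good {m : ℕ} : Good (B6 : Matrix (Fin (m+3)) (Fin (m+3)) ℝ) :=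
  ⟨B6_orth, B6_comm _ (by simp), B6_comm _ (by simp), B6_comm _ (by simp)⟩

theorem th4_four {m : ℕ} (X : Matrix (Fin (m+3)) (Fin (m+3)) ℝ) :
    th4 (th4 (th4 (th4 X))) = X := by
  have h : (B4 : Matrix (Fin (m+3)) (Fin (m+3)) ℝ) * B4 * (B4 * B4) = 1 := by
    simp only [B4_BM, BM_mul]
    rw [← BM_one]
    congr 1 <;> norm_num
  calc th4 (th4 (th4 (th4 X))) = (B4 * B4 * (B4 * B4)) * X * (B4 * B4 * (B4 * B4))ᵀ := by
        simp only [th4, Matrix.transpose_mul, Matrix.mul_assoc]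
    _ = X := by simp [h]

theorem th6_six {m : ℕ} (X : Matrix (Fin (m+3)) (Fin (m+3)) ℝ) :
    th6 (th6 (th6 (th6 (th6 (th6 X))))) = X := by
  have h : (B6 : Matrix (Fin (m+3)) (Fin (m+3)) ℝ) * (B6 * B6) * (B6 * (B6 * B6)) = 1 := by
    have q : (B6 : Matrix (Fin (m+3)) (Fin (m+3)) ℝ) * (B6 * B6) = BM 1 (-1) 0 0 (-1) (-1) := by
      simp only [B6_BM, BM_mul]
      congr 1 <;> grind [sq3]
    rw [q, BM_mul, ← BM_one]
    congr 1 <;> norm_num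
  calc th6 (th6 (th6 (th6 (th6 (th6 X))))) =
        (B6 * (B6 * B6) * (B6 * (B6 * B6))) * X * (B6 * (B6 * B6) * (B6 * (B6 * B6)))ᵀ := by
        simp only [th6, Matrix.transpose_mul, Matrix.mul_assoc]
    _ = X := by simp [h]

end FlagMfld

/-- For every `s, t > 0`, each of the canonical f-structures `f₀`
(order 4) and `f₁, f₂, f₃, f₄` (order 6) is skew-symmetric with respect to `g_{s,t}`,
i.e. they are metric f-structures for every invariant Riemannian metric. -/
theorem statement11 (n : ℕ) (hn : 4 ≤ n) (s t : ℝ) (hs : 0 < s) (ht : 0 < t) :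
    ∀ X Y : Matrix (Fin n) (Fin n) ℝ, inM X → inM Y →
      gst s t (f0 X) Y + gst s t X (f0 Y) = 0 ∧
      gst s t (f1 X) Y + gst s t X (f1 Y) = 0 ∧
      gst s t (f2 X) Y + gst s t X (f2 Y) = 0 ∧
      gst s t (f3 X) Y + gst s t X (f3 Y) = 0 ∧
      gst s t (f4 X) Y + gst s t X (f4 Y) = 0 := by
  intro X Y _ _
  obtain ⟨m, rfl⟩ : ∃ m, n = m + 3 := ⟨n - 3, by omega⟩
  have i4 : ∀ U V : Matrix (Fin (m+3)) (Fin (m+3)) ℝ,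
    gst s t (th4 U) (th4 V) = gst s t U V := fun U V => gst_inv B4_good s t U V
  have i6 : ∀ U V : Matrix (Fin (m+3)) (Fin (m+3)) ℝ,
    gst s t (th6 U) (th6 V) = gst s t U V := fun U V => gst_inv B6_good s t U V
  have a1 : gst s t (th4 X) Y = gst s t X (th4 (th4 (th4 Y))) := by
    conv_lhs => rw [← th4_four Y]
    simp only [i4]
  have a3 : gst s t (th4 (th4 (th4 X))) Y = gst s t X (th4 Y) := by
    conv_lhs => rw [← th4_four Y]
    simp only [i4]
  have b1 : gst s t (th6 X) Y = gst s t X (th6 (th6 (th6 (th6 (th6 Y))))) := by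
    conv_lhs => rw [← th6_six Y]
    simp only [i6]
  have b2 : gst s t (th6 (th6 X)) Y = gst s t X (th6 (th6 (th6 (th6 Y)))) := by
    conv_lhs => rw [← th6_six Y]
    simp only [i6]
  have b4 : gst s t (th6 (th6 (th6 (th6 X)))) Y = gst s t X (th6 (th6 Y)) := by
    conv_lhs => rw [← th6_six Y]
    simp only [i6]
  have b5 : gst s t (th6 (th6 (th6 (th6 (th6 X))))) Y = gst s t X (th6 Y) := by
    conv_lhs => rw [← th6_six Y]
    simp only [i6]
  simp only [f0, f1, f2, f3, f4, gst_smul, gst_smul', gst_add, gst_add', gst_sub, gst_sub',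
    a1, a3, b1, b2, b4, b5]
  refine ⟨?_, ?_, ?_, ?_, ?_⟩ <;> ring
end
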